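/- There exist a constant C > 0 and an integer L₀ ≥ 1 such that for all L ≥ L₀ and all x₀ ∈ Q_{R_L − r_L}, on the event E_{L,x₀}(κ) the following hold: | λ₁(Q_{R_L}, ξ_L) − λ̄_L − Ξ_L(x₀) | ≤ C (d_L/a_L) ( (d_L/a_L)^{1−2κ} |ξ_L(x₀) − a_L| + 1/a_L ), where Ξ_L(x₀) = ξ_L(x₀) + Φ_L(x₀); and ‖ φ_{R_L} − φ̄_L(· − x₀) ‖_{ℓ²(Q_{R_L})} ≤ C (d_L/a_L) √( (d_L/a_L)^{1−2κ} |ξ_L(x₀) − a_L| + 1/a_L ), where φ_{R_L} is the ℓ²-normalised nonnegative principal eigenfunction of Δ + ξ_L on Q_{R_L} with Dirichlet b.c. and φ̄_L is extended by 0 outside Q_{r_L}. -/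

import Mathlib

open MeasureTheory ProbabilityTheory Filter Finset

noncomputable section

/-- Euclidean (ℓ²) norm of a point of `ℤ^d`. -/
def znorm {d : ℕ} (x : Fin d → ℤ) : ℝ := Real.sqrt (∑ i, ((x i : ℝ)) ^ 2)

/-- The discrete box `[-a/2, a/2]^d ∩ ℤ^d`. -/
def QBox (d : ℕ) (a : ℝ) : Finset (Fin d → ℤ) :=
  Finset.Icc (fun _ => Int.ceil (-(a / 2))) (fun _ => Int.floor (a / 2))

/-- The translated box `z + ([-a/2, a/2]^d ∩ ℤ^d)`. -/
def QBoxAt {d : ℕ} (a : ℝ) (z : Fin d → ℤ) : Finset (Fin d → ℤ) :=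
  (QBox d a).image (fun x => z + x)

/-- The box `[-1,1]^d ⊂ ℝ^d`. -/
def unitBox (d : ℕ) : Set (Fin d → ℝ) := Set.univ.pi fun _ => Set.Icc (-1) 1

/-- Nearest-neighbour adjacency on `ℤ^d`. -/
def Adj {d : ℕ} (x y : Fin d → ℤ) : Prop := (∑ i, |x i - y i|) = 1

instance {d : ℕ} (x y : Fin d → ℤ) : Decidable (Adj x y) := by
  unfold Adj; infer_instance

/-- `(lam, f)` is an eigenpair of the Anderson Hamiltonian `Δ + V` on `C ⊂ ℤ^d`
with Dirichlet boundary conditions (`f` vanishes outside `C`). -/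
def IsDirichletEigenpair {d : ℕ} (C : Finset (Fin d → ℤ)) (V : (Fin d → ℤ) → ℝ)
    (lam : ℝ) (f : (Fin d → ℤ) → ℝ) : Prop :=
  (∀ x ∉ C, f x = 0) ∧
  ∀ x ∈ C, ((∑ y ∈ C, if Adj x y then f y else 0) - 2 * (d : ℝ) * f x) + V x * f x = lam * f x

/-- `lam` is the largest Dirichlet eigenvalue of `Δ + V` on `C`. -/
def IsTopEigenvalue {d : ℕ} (C : Finset (Fin d → ℤ)) (V : (Fin d → ℤ) → ℝ) (lam : ℝ) : Prop :=
  (∃ f, f ≠ 0 ∧ IsDirichletEigenpair C V lam f) ∧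
  ∀ mu g, g ≠ 0 → IsDirichletEigenpair C V mu g → mu ≤ lam

/-- `(lam, f)` is the principal Dirichlet eigenvalue of `Δ + V` on `C` together with its
ℓ²-normalised nonnegative principal eigenfunction. -/
def IsPrincipalEigenpair {d : ℕ} (C : Finset (Fin d → ℤ)) (V : (Fin d → ℤ) → ℝ)
    (lam : ℝ) (f : (Fin d → ℤ) → ℝ) : Prop :=
  IsDirichletEigenpair C V lam f ∧ (∑ x ∈ C, f x ^ 2) = 1 ∧ (∀ x, 0 ≤ f x) ∧
  ∀ mu g, g ≠ 0 → IsDirichletEigenpair C V mu g → mu ≤ lam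

/-- A complete orthonormal eigenbasis of `Δ + V` on `C` with Dirichlet boundary
conditions, the eigenvalues being listed in nonincreasing order: `lam k` is the
`(k+1)`-th largest eigenvalue (with multiplicity) and `phi k` the associated
normalised eigenfunction. -/
def IsDirichletEigenbasis {d : ℕ} (C : Finset (Fin d → ℤ)) (V : (Fin d → ℤ) → ℝ)
    (lam : ℕ → ℝ) (phi : ℕ → (Fin d → ℤ) → ℝ) : Prop :=
  (∀ k < C.card, IsDirichletEigenpair C V (lam k) (phi k)) ∧
  (∀ j < C.card, ∀ k < C.card, j ≤ k → lam k ≤ lam j) ∧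
  (∀ j < C.card, ∀ k < C.card, (∑ x ∈ C, phi j x * phi k x) = if j = k then 1 else 0)

/-- Covariance of two real random variables. -/
def covar {Ω : Type} [MeasurableSpace Ω] (P : Measure Ω) (X Y : Ω → ℝ) : ℝ :=
  ∫ ω, (X ω - ∫ ω', X ω' ∂P) * (Y ω - ∫ ω', Y ω' ∂P) ∂P

/-- The basic setting of the paper: for each `L`, a centred stationary Gaussian field
`ξ_L` on `ℤ^d` with nonnegative covariance function `v_L`, `v_L(0) = 1`; `d_L` is defined
through `sup_{|x|=1} v_L(x) = 1 − 1/d_L` and `a_L > 0` through `P(ξ_L(0) > a_L) = L^{−d}`. -/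
structure GaussSetting (d : ℕ) (Ω : Type) [MeasurableSpace Ω] where
  P : Measure Ω
  hP : IsProbabilityMeasure P
  ξ : ℕ → Ω → (Fin d → ℤ) → ℝ
  v : ℕ → (Fin d → ℤ) → ℝ
  meas : ∀ L x, Measurable fun ω => ξ L ω x
  v_nonneg : ∀ L x, 0 ≤ v L x
  v_zero : ∀ L, v L 0 = 1
  gaussian : ∀ L, 2 ≤ L → ∀ (s : Finset (Fin d → ℤ)) (c : (Fin d → ℤ) → ℝ),
    Measure.map (fun ω => ∑ x ∈ s, c x * ξ L ω x) P
      = gaussianReal 0 (Real.toNNReal (∑ x ∈ s, ∑ y ∈ s, c x * c y * v L (x - y)))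
  dL : ℕ → ℝ
  dL_pos : ∀ L, 2 ≤ L → 0 < dL L
  dL_def : ∀ L, 2 ≤ L →
    IsGreatest {t : ℝ | ∃ x : Fin d → ℤ, znorm x = 1 ∧ t = v L x} (1 - 1 / dL L)
  aL : ℕ → ℝ
  aL_pos : ∀ L, 2 ≤ L → 0 < aL L
  aL_def : ∀ L, 2 ≤ L →
    P {ω | aL L < ξ L ω 0} = ENNReal.ofReal (1 / (L : ℝ) ^ d)

namespace GaussSetting

variable {d : ℕ} {Ω : Type} [MeasurableSpace Ω] (S : GaussSetting d Ω)

/-- The shape `S_L(x) = a_L (1 − v_L(x))`. -/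
def shape (L : ℕ) (x : Fin d → ℤ) : ℝ := S.aL L * (1 - S.v L x)

/-- Long-range decay assumption (I):
`sup_{|x| ≥ exp(√(ln L))} v_L(x) ln|x| → 0` as `L → ∞`. -/
def LongRangeDecay : Prop :=
  ∀ ε > (0 : ℝ), ∀ᶠ L : ℕ in atTop, ∀ x : Fin d → ℤ,
    Real.exp (Real.sqrt (Real.log L)) ≤ znorm x → S.v L x * Real.log (znorm x) ≤ ε

/-- Short-range decay assumption (II), with constants `c, c' > 0`. -/
def ShortRangeDecay (c c' : ℝ) : Prop :=
  0 < c ∧ 0 < c' ∧ ∀ L, 2 ≤ L → ∀ x : Fin d → ℤ, x ≠ 0 →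
    1 - Real.exp (c' * znorm x) / S.dL L ≤ S.v L x ∧ S.v L x ≤ 1 - c / S.dL L

/-- Assumption 1: `d_L ≪ a_L`. -/
def Assumption1 : Prop := Tendsto (fun L => S.dL L / S.aL L) atTop (nhds 0)

/-- The fluctuation field `ζ_{L,y}(x) = ξ_L(x) − ξ_L(y) v_L(x − y)`. -/
def zeta (L : ℕ) (y x : Fin d → ℤ) (ω : Ω) : ℝ :=
  S.ξ L ω x - S.ξ L ω y * S.v L (x - y)

/-- The field `Φ_L(y) = ∑_{x ∈ Q_{r_L}, x ≠ 0} φ̄_L(x)² ζ_{L,y}(x + y)`. -/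
def Phi (r : ℕ → ℝ) (phiBar : ℕ → (Fin d → ℤ) → ℝ) (L : ℕ) (y : Fin d → ℤ)
    (ω : Ω) : ℝ :=
  ∑ x ∈ (QBox d (r L)).erase 0, phiBar L x ^ 2 * S.zeta L y (x + y) ω

end GaussSetting

/-- The auxiliary mesoscopic data: the scales `r_L, R_L`, the principal eigenpair
`(λ̄_L, φ̄_L)` of `Δ − S_L` on `Q_{r_L}` and `τ_L` with `τ_L² = Var(Φ_L(0))`. -/
structure MesoData {d : ℕ} {Ω : Type} [MeasurableSpace Ω] (S : GaussSetting d Ω) where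
  rL : ℕ → ℝ
  RL : ℕ → ℝ
  lamBar : ℕ → ℝ
  phiBar : ℕ → (Fin d → ℤ) → ℝ
  tau : ℕ → ℝ
  rL_lower : ∀ L, 2 ≤ L → Real.log (S.aL L) ≤ Real.log (rL L)
  rL_upper : Tendsto (fun L => Real.log (rL L) / Real.sqrt (S.aL L)) atTop (nhds 0)
  RL_lower : Tendsto (fun L => S.aL L / Real.log (RL L)) atTop (nhds 0)
  RL_upper : Tendsto (fun L => Real.log (RL L) / (S.aL L * (S.aL L / S.dL L))) atTop (nhds 0)
  principal : ∀ L, 2 ≤ L →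
    IsPrincipalEigenpair (QBox d (rL L)) (fun x => -(S.shape L x)) (lamBar L) (phiBar L)
  tau_nonneg : ∀ L, 0 ≤ tau L
  tau_def : ∀ L, 2 ≤ L → tau L ^ 2 = variance (S.Phi rL phiBar L 0) S.P

/-- Assumption 2: `τ_L ≪ a_L^{-1} (a_L/d_L)^{1/2}`. -/
def Assumption2 {d : ℕ} {Ω : Type} [MeasurableSpace Ω] (S : GaussSetting d Ω)
    (M : MesoData S) : Prop :=
  Tendsto (fun L => S.aL L * M.tau L * Real.sqrt (S.dL L / S.aL L)) atTop (nhds 0)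

/-- The event `E¹_{L,x₀} = {|ξ_L(x₀) − a_L| < θ}`, `θ = 2d+1`. -/
def EventE1 {d : ℕ} {Ω : Type} [MeasurableSpace Ω] (S : GaussSetting d Ω) (L : ℕ)
    (x₀ : Fin d → ℤ) : Set Ω :=
  {ω | |S.ξ L ω x₀ - S.aL L| < 2 * (d : ℝ) + 1}

/-- The event `E²_{L,x₀} = {|ζ_{L,x₀}(x)| ≤ S_L(x−x₀)/10, ∀ x ∈ Q_{2R_L,x₀}}`. -/
def EventE2 {d : ℕ} {Ω : Type} [MeasurableSpace Ω] (S : GaussSetting d Ω) (RL : ℕ → ℝ)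
    (L : ℕ) (x₀ : Fin d → ℤ) : Set Ω :=
  {ω | ∀ x ∈ QBoxAt (2 * RL L) x₀, |S.zeta L x₀ x ω| ≤ S.shape L (x - x₀) / 10}

/-- The event `E³_{L,x₀}` controlling the fluctuation field on `Q_{R_L,x₀}`. -/
def EventE3 {d : ℕ} {Ω : Type} [MeasurableSpace Ω] (S : GaussSetting d Ω) (RL : ℕ → ℝ)
    (κ : ℝ) (L : ℕ) (x₀ : Fin d → ℤ) : Set Ω :=
  {ω | ∀ x ∈ QBoxAt (RL L) x₀, x ≠ x₀ →
    |S.zeta L x₀ x ω| ≤ Real.sqrt (variance (S.zeta L x₀ x) S.P) *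
      (S.aL L / S.dL L) ^ (κ * znorm (x - x₀)) *
      Real.sqrt (max 1 (|S.ξ L ω x₀ - S.aL L| * S.aL L))}

/-- The event `E_{L,x₀} = E¹ ∩ E² ∩ E³`. -/
def EventE {d : ℕ} {Ω : Type} [MeasurableSpace Ω] (S : GaussSetting d Ω) (RL : ℕ → ℝ)
    (κ : ℝ) (L : ℕ) (x₀ : Fin d → ℤ) : Set Ω :=
  EventE1 S L x₀ ∩ EventE2 S RL L x₀ ∩ EventE3 S RL κ L x₀

end

/-!
Translated to `x₀`, the eigenfunction `φ̄_L` is a quasimode `ψ` of `H = Δ + ξ_L` on `Q_{R_L}`: as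
`ξ_L(x) - ξ_L(x₀) + S_L(x - x₀) = ζ_{L,x₀}(x) - (ξ_L(x₀) - a_L)(1 - v_L(x - x₀))`, the residual
`(H - ν) ψ` with `ν = λ̄_L + ξ_L(x₀)` consists of this right-hand side times `ψ`, and of a hopping
term across the boundary of `x₀ + Q_{r_L}`.

On `E_{L,x₀}(κ)` the field at `x₀` exceeds its other values on `Q_{R_L}` by an amount of order
`a_L/d_L`, and `ψ` is concentrated at `x₀`. Since `Δ ≤ 0`, the quadratic form of `H` on the
orthogonal complement of `ψ` is therefore below its top eigenvalue by a gap of order `a_L/d_L`.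
Projecting the eigenvalue equation shows that the eigenfunction is within (residual / gap) of `ψ`,
up to a constant, and that the eigenvalue is within (residual² / gap) of the Rayleigh quotient of
`ψ`, which is `λ̄_L + Ξ_L(x₀)` up to the small error `(ξ_L(x₀) - a_L) ∑ (1 - v_L) φ̄_L²`.

The residual is small because `φ̄_L(x) ≤ (2d d_L / (c a_L))^{|x|₁}`, from iterating the eigenvalue
equation: this beats the growth `(a_L/d_L)^{κ|x|}` permitted to `ζ_{L,x₀}`, and the remaining powers
of `d_L/a_L` give the rate `(d_L/a_L)^{1-2κ} |ξ_L(x₀) - a_L| + 1/a_L`.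
-/

noncomputable section

open scoped RealInnerProductSpace

/-! ### Quasimodes of a symmetric operator with a spectral gap -/

section InnerProductSpace

variable {E : Type*} [NormedAddCommGroup E] [InnerProductSpace ℝ E]

lemma inner_le_of_forall_hasEigenvalue_le [FiniteDimensional ℝ E] {T : E →ₗ[ℝ] E}
    (hT : T.IsSymmetric) {μ : ℝ} (hμ : ∀ ν, Module.End.HasEigenvalue T ν → ν ≤ μ) (u : E) :
    ⟪u, T u⟫ ≤ μ * ‖u‖ ^ 2 := by
  let b := hT.eigenvectorBasis rfl
  calc ⟪u, T u⟫ = ∑ i, ⟪u, b i⟫ * ⟪b i, T u⟫ := (b.sum_inner_mul_inner u (T u)).symm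
    _ = ∑ i, hT.eigenvalues rfl i * ⟪u, b i⟫ ^ 2 := by
        refine sum_congr rfl fun i _ => ?_
        have hb : T (b i) = hT.eigenvalues rfl i • b i := hT.apply_eigenvectorBasis rfl i
        rw [← hT, hb, real_inner_smul_left, real_inner_comm u (b i)]
        ring
    _ ≤ ∑ i, μ * ⟪u, b i⟫ ^ 2 := by
        gcongr with i
        exact hμ _ (hT.hasEigenvalue_eigenvalues rfl i)
    _ = μ * ‖u‖ ^ 2 := by rw [← mul_sum, b.sum_sq_inner_left]

lemma norm_sub_inner_smul_sq {φ ψ : E} (hφ : ‖φ‖ = 1) (hψ : ‖ψ‖ = 1) :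
    ‖φ - ⟪φ, ψ⟫ • ψ‖ ^ 2 = 1 - ⟪φ, ψ⟫ ^ 2 := by
  rw [norm_sub_sq_real, norm_smul, inner_smul_right, hφ, hψ, Real.norm_eq_abs, mul_one, sq_abs]
  ring

lemma inner_sub_inner_smul_self {φ ψ : E} (hψ : ‖ψ‖ = 1) : ⟪φ - ⟪φ, ψ⟫ • ψ, ψ⟫ = 0 := by
  rw [inner_sub_left, real_inner_smul_left, real_inner_self_eq_norm_sq, hψ]
  ring

lemma sq_inner_le_of_inner_eq_zero {u ψ e : E} (hψ : ‖ψ‖ = 1) (he : ‖e‖ = 1) (hu : ⟪u, ψ⟫ = 0) :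
    ⟪u, e⟫ ^ 2 ≤ (1 - ⟪e, ψ⟫ ^ 2) * ‖u‖ ^ 2 := by
  have hproj : ⟪u, e - ⟪e, ψ⟫ • ψ⟫ = ⟪u, e⟫ := by
    rw [inner_sub_right, inner_smul_right, hu, mul_zero, sub_zero]
  calc ⟪u, e⟫ ^ 2 = |⟪u, e - ⟪e, ψ⟫ • ψ⟫| ^ 2 := by rw [hproj, sq_abs]
    _ ≤ (‖u‖ * ‖e - ⟪e, ψ⟫ • ψ‖) ^ 2 := by gcongr; exact abs_real_inner_le_norm _ _
    _ = (1 - ⟪e, ψ⟫ ^ 2) * ‖u‖ ^ 2 := by rw [mul_pow, norm_sub_inner_smul_sq he hψ, mul_comm]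

section Quasimode

variable {T : E →ₗ[ℝ] E} {φ ψ : E} {lam g : ℝ}

lemma gap_mul_norm_le (hφ : T φ = lam • φ) (hψ : ‖ψ‖ = 1) (hφψ : 0 ≤ ⟪φ, ψ⟫)
    (hgap : ∀ u, ⟪u, ψ⟫ = 0 → ⟪u, T u⟫ ≤ (lam - g) * ‖u‖ ^ 2) (ν : ℝ) :
    g * ‖φ - ⟪φ, ψ⟫ • ψ‖ ≤ ⟪φ, ψ⟫ * ‖T ψ - ν • ψ‖ := by
  set α := ⟪φ, ψ⟫
  set u := φ - α • ψ with hu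
  set r := T ψ - ν • ψ with hr
  have huψ : ⟪u, ψ⟫ = 0 := inner_sub_inner_smul_self hψ
  have hTu : T u = lam • u + (α * (lam - ν)) • ψ - α • r := by
    rw [hu, hr, map_sub, map_smul, hφ]
    module
  have hquad : ⟪u, T u⟫ = lam * ‖u‖ ^ 2 - α * ⟪u, r⟫ := by
    rw [hTu, inner_sub_right, inner_add_right]
    simp only [inner_smul_right, huψ, real_inner_self_eq_norm_sq]
    ring
  rcases (norm_nonneg u).eq_or_lt with h0 | hpos
  · rw [← h0, mul_zero]
    positivity
  · refine le_of_mul_le_mul_right ?_ hpos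
    calc g * ‖u‖ * ‖u‖ ≤ α * ⟪u, r⟫ := by linarith [hgap u huψ]
      _ ≤ α * (‖u‖ * ‖r‖) := by gcongr; exact real_inner_le_norm u r
      _ = α * ‖r‖ * ‖u‖ := by ring

lemma norm_sub_sq_le_of_quasimode (hφ : T φ = lam • φ) (hφ1 : ‖φ‖ = 1) (hψ1 : ‖ψ‖ = 1)
    (hφψ : 0 ≤ ⟪φ, ψ⟫) (hg : 0 < g)
    (hgap : ∀ u, ⟪u, ψ⟫ = 0 → ⟪u, T u⟫ ≤ (lam - g) * ‖u‖ ^ 2) (ν : ℝ) :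
    ‖φ - ψ‖ ^ 2 ≤ 2 * ‖T ψ - ν • ψ‖ ^ 2 / g ^ 2 := by
  have hle := gap_mul_norm_le hφ hψ1 hφψ hgap ν
  have hu := norm_sub_inner_smul_sq hφ1 hψ1
  set α := ⟪φ, ψ⟫
  have hα1 : α ≤ 1 := by simpa [hφ1, hψ1] using real_inner_le_norm φ ψ
  have hdist : ‖φ - ψ‖ ^ 2 = 2 - 2 * α := by
    rw [norm_sub_sq_real, hφ1, hψ1]
    ring
  have hle' : g * ‖φ - α • ψ‖ ≤ ‖T ψ - ν • ψ‖ :=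
    hle.trans (mul_le_of_le_one_left (norm_nonneg _) hα1)
  rw [le_div_iff₀ (by positivity)]
  calc ‖φ - ψ‖ ^ 2 * g ^ 2 ≤ 2 * ‖φ - α • ψ‖ ^ 2 * g ^ 2 := by gcongr; nlinarith
    _ = 2 * (g * ‖φ - α • ψ‖) ^ 2 := by ring
    _ ≤ 2 * ‖T ψ - ν • ψ‖ ^ 2 := by gcongr

lemma abs_sub_inner_le_of_quasimode (hT : T.IsSymmetric) (hφ : T φ = lam • φ) (hφ1 : ‖φ‖ = 1)
    (hψ1 : ‖ψ‖ = 1) (hφψ : 0 ≤ ⟪φ, ψ⟫) (hg : 0 < g)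
    (hgap : ∀ u, ⟪u, ψ⟫ = 0 → ⟪u, T u⟫ ≤ (lam - g) * ‖u‖ ^ 2) (ν : ℝ) :
    |lam - ⟪ψ, T ψ⟫| ≤ ‖T ψ - ν • ψ‖ ^ 2 / g := by
  have hle := gap_mul_norm_le hφ hψ1 hφψ hgap ν
  have hu_sq := norm_sub_inner_smul_sq hφ1 hψ1
  have huψ := inner_sub_inner_smul_self (φ := φ) hψ1
  set α := ⟪φ, ψ⟫
  set u := φ - α • ψ with hu
  set r := T ψ - ν • ψ with hr
  have hα0 : 0 < α := by
    refine hφψ.lt_of_ne fun h0 => ?_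
    rw [← h0] at hu_sq hle
    nlinarith [norm_nonneg u]
  have hα_mul : α * (lam - ⟪ψ, T ψ⟫) = ⟪u, r⟫ := by
    have hsymm : ⟪φ, T ψ⟫ = lam * α := by rw [← hT, hφ, real_inner_smul_left]
    rw [hr, inner_sub_right, inner_smul_right, huψ, hu, inner_sub_left, real_inner_smul_left, hsymm]
    ring
  have habs : α * |lam - ⟪ψ, T ψ⟫| ≤ ‖u‖ * ‖r‖ :=
    calc α * |lam - ⟪ψ, T ψ⟫| = |⟪u, r⟫| := by rw [← hα_mul, abs_mul, abs_of_pos hα0]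
      _ ≤ ‖u‖ * ‖r‖ := abs_real_inner_le_norm u r
  rw [le_div_iff₀ hg]
  refine le_of_mul_le_mul_left ?_ hα0
  calc α * (|lam - ⟪ψ, T ψ⟫| * g) = α * |lam - ⟪ψ, T ψ⟫| * g := by ring
    _ ≤ ‖u‖ * ‖r‖ * g := by gcongr
    _ = g * ‖u‖ * ‖r‖ := by ring
    _ ≤ α * ‖r‖ * ‖r‖ := by gcongr
    _ = α * ‖r‖ ^ 2 := by ring

end Quasimode

end InnerProductSpace

/-! ### The lattice and its boxes -/

section Lattice

variable {d : ℕ}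

/-- The `ℓ¹` norm on `ℤ^d`, the graph distance to the origin; a natural number so that it can
serve as an exponent. -/
def l1Norm (x : Fin d → ℤ) : ℕ := ∑ i, (x i).natAbs

lemma l1Norm_eq_zero {x : Fin d → ℤ} : l1Norm x = 0 ↔ x = 0 := by
  simp [l1Norm, funext_iff]

lemma l1Norm_add_le (x y : Fin d → ℤ) : l1Norm (x + y) ≤ l1Norm x + l1Norm y := by
  rw [l1Norm, l1Norm, l1Norm, ← sum_add_distrib]
  exact sum_le_sum fun i _ => Int.natAbs_add_le _ _

lemma natAbs_le_l1Norm (x : Fin d → ℤ) (i : Fin d) : (x i).natAbs ≤ l1Norm x :=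
  single_le_sum (f := fun i => (x i).natAbs) (fun _ _ => Nat.zero_le _) (mem_univ i)

lemma znorm_le_l1Norm (x : Fin d → ℤ) : znorm x ≤ l1Norm x := by
  refine Real.sqrt_le_iff.2 ⟨Nat.cast_nonneg _, ?_⟩
  calc ∑ i, (x i : ℝ) ^ 2 = ∑ i, |(x i : ℝ)| ^ 2 := by simp only [sq_abs]
    _ ≤ (∑ i, |(x i : ℝ)|) ^ 2 := sum_sq_le_sq_sum_of_nonneg fun i _ => abs_nonneg _
    _ = (l1Norm x : ℝ) ^ 2 := by simp [l1Norm]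

lemma znorm_neg (x : Fin d → ℤ) : znorm (-x) = znorm x := by
  simp [znorm]

lemma sum_pow_natAbs_le {r : ℝ} (hr0 : 0 ≤ r) (hr1 : r < 1) (s : Finset ℤ) :
    ∑ n ∈ s, r ^ n.natAbs ≤ (1 + r) / (1 - r) := by
  have hpos : HasSum (fun n : ℕ => r ^ (n : ℤ).natAbs) (1 - r)⁻¹ := by
    simpa using hasSum_geometric_of_lt_one hr0 hr1
  have hneg : HasSum (fun n : ℕ => r ^ (-((n : ℤ) + 1)).natAbs) (r * (1 - r)⁻¹) := by
    refine ((hasSum_geometric_of_lt_one hr0 hr1).mul_left r).congr_fun fun n => ?_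
    rw [← pow_succ', show (-((n : ℤ) + 1)).natAbs = n + 1 by omega]
  have hsum := HasSum.of_nat_of_neg_add_one (f := fun n : ℤ => r ^ n.natAbs) hpos hneg
  calc ∑ n ∈ s, r ^ n.natAbs ≤ (1 - r)⁻¹ + r * (1 - r)⁻¹ :=
        sum_le_hasSum s (fun _ _ => by positivity) hsum
    _ = (1 + r) / (1 - r) := by ring

lemma sum_pow_l1Norm_le {r : ℝ} (hr0 : 0 ≤ r) (hr1 : r < 1) (s : Finset (Fin d → ℤ)) :
    ∑ x ∈ s, r ^ l1Norm x ≤ ((1 + r) / (1 - r)) ^ d := by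
  let t : Fin d → Finset ℤ := fun i => s.image (· i)
  have hst : s ⊆ Fintype.piFinset t := fun x hx =>
    Fintype.mem_piFinset.2 fun i => mem_image_of_mem _ hx
  calc ∑ x ∈ s, r ^ l1Norm x ≤ ∑ x ∈ Fintype.piFinset t, r ^ l1Norm x :=
        sum_le_sum_of_subset_of_nonneg hst fun _ _ _ => by positivity
    _ = ∏ i, ∑ n ∈ t i, r ^ n.natAbs := by
        rw [prod_univ_sum]
        exact sum_congr rfl fun x _ => (prod_pow_eq_pow_sum _ _ _).symm
    _ ≤ ∏ _i : Fin d, (1 + r) / (1 - r) := by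
        gcongr with i
        exact sum_pow_natAbs_le hr0 hr1 _
    _ = ((1 + r) / (1 - r)) ^ d := by rw [prod_const, card_univ, Fintype.card_fin]

lemma sum_half_pow_l1Norm_le (s : Finset (Fin d → ℤ)) :
    ∑ x ∈ s, (1 / 2 : ℝ) ^ l1Norm x ≤ 3 ^ d :=
  (sum_pow_l1Norm_le (by norm_num) (by norm_num) s).trans_eq (by norm_num)

lemma adj_comm {x y : Fin d → ℤ} : Adj x y ↔ Adj y x := by
  simp only [Adj, abs_sub_comm]

lemma adj_sub_right {x y : Fin d → ℤ} (z : Fin d → ℤ) : Adj (x - z) (y - z) ↔ Adj x y := by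
  simp only [Adj, Pi.sub_apply, sub_sub_sub_cancel_right]

lemma adj_iff_l1Norm_sub {x y : Fin d → ℤ} : Adj x y ↔ l1Norm (y - x) = 1 := by
  rw [adj_comm, Adj, l1Norm, ← Nat.cast_inj (R := ℤ)]
  simp

lemma Adj.l1Norm_le {x y : Fin d → ℤ} (h : Adj x y) : l1Norm x ≤ l1Norm y + 1 := by
  simpa [adj_iff_l1Norm_sub.1 (adj_comm.1 h)] using l1Norm_add_le y (x - y)

lemma exists_eq_single_of_l1Norm_eq_one {x : Fin d → ℤ} (hx : l1Norm x = 1) :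
    ∃ i, x = Pi.single i 1 ∨ x = Pi.single i (-1) := by
  obtain ⟨i, hi⟩ : ∃ i, x i ≠ 0 := by
    by_contra! h
    simp [l1Norm, h] at hx
  have hsplit : (x i).natAbs + ∑ j ∈ univ.erase i, (x j).natAbs = 1 := by
    rw [add_sum_erase _ (fun j => (x j).natAbs) (mem_univ i)]
    exact hx
  have hother : ∀ j ≠ i, x j = 0 := by
    have hzero : ∑ j ∈ univ.erase i, (x j).natAbs = 0 := by omega
    exact fun j hj => by simpa using sum_eq_zero_iff.1 hzero j (by simp [hj])
  refine ⟨i, ?_⟩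
  have hsign : x i = 1 ∨ x i = -1 := by omega
  refine hsign.imp ?_ ?_ <;>
  · intro h
    ext j
    by_cases hj : j = i
    · subst hj; simpa using h
    · simp [hj, hother j hj]

lemma card_filter_adj_le (C : Finset (Fin d → ℤ)) (x : Fin d → ℤ) :
    (C.filter (Adj x)).card ≤ 2 * d := by
  let nbr : Fin d × Bool → Fin d → ℤ := fun p => x + Pi.single p.1 (if p.2 then 1 else -1)
  have hsub : C.filter (Adj x) ⊆ univ.image nbr := by
    intro y hy
    obtain ⟨i, h | h⟩ :=
      exists_eq_single_of_l1Norm_eq_one (adj_iff_l1Norm_sub.1 (mem_filter.1 hy).2)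
    · exact mem_image.2 ⟨(i, true), mem_univ _, by simp [nbr, ← h]⟩
    · exact mem_image.2 ⟨(i, false), mem_univ _, by simp [nbr, ← h]⟩
  calc (C.filter (Adj x)).card ≤ (univ : Finset (Fin d × Bool)).card :=
        (card_le_card hsub).trans card_image_le
    _ = 2 * d := by simp [mul_comm]

lemma mem_QBox {a : ℝ} {x : Fin d → ℤ} : x ∈ QBox d a ↔ ∀ i, |(x i : ℝ)| ≤ a / 2 := by
  simp only [QBox, mem_Icc, Pi.le_def, Int.ceil_le, Int.le_floor, abs_le, forall_and]

lemma mem_QBoxAt {a : ℝ} {x z : Fin d → ℤ} : x ∈ QBoxAt a z ↔ x - z ∈ QBox d a := by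
  simp only [QBoxAt, mem_image]
  exact ⟨fun ⟨y, hy, h⟩ => by simpa [← h] using hy, fun h => ⟨x - z, h, by simp⟩⟩

lemma zero_mem_QBox {a : ℝ} (ha : 0 ≤ a) : (0 : Fin d → ℤ) ∈ QBox d a := by
  rw [mem_QBox]
  intro i
  simpa using div_nonneg ha zero_le_two

lemma QBox_mono {a b : ℝ} (h : a ≤ b) : QBox d a ⊆ QBox d b := fun x hx =>
  mem_QBox.2 fun i => (mem_QBox.1 hx i).trans (by linarith)

lemma add_mem_QBox {a b : ℝ} {x y : Fin d → ℤ} (hx : x ∈ QBox d a) (hy : y ∈ QBox d b) :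
    x + y ∈ QBox d (a + b) := by
  rw [mem_QBox] at *
  intro i
  have := abs_add_le (x i : ℝ) (y i : ℝ)
  simp only [Pi.add_apply, Int.cast_add]
  linarith [hx i, hy i]

lemma neg_mem_QBox {a : ℝ} {x : Fin d → ℤ} : -x ∈ QBox d a ↔ x ∈ QBox d a := by
  simp [mem_QBox]

lemma add_mem_QBox_of_mem_sub {a b : ℝ} {x y : Fin d → ℤ} (hx : x ∈ QBox d (b - a))
    (hy : y ∈ QBox d a) : y + x ∈ QBox d b := by
  simpa using add_mem_QBox hy hx

lemma QBox_subset_of_mem_sub {a b : ℝ} {x : Fin d → ℤ} (hx : x ∈ QBox d (b - a)) :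
    QBox d a ⊆ QBox d b := fun y hy => mem_QBox.2 fun i => by
  linarith [mem_QBox.1 hx i, mem_QBox.1 hy i, abs_nonneg (x i : ℝ)]

lemma half_lt_l1Norm_of_notMem_QBox {a : ℝ} {x : Fin d → ℤ} (hx : x ∉ QBox d a) :
    a / 2 < l1Norm x := by
  obtain ⟨i, hi⟩ : ∃ i, a / 2 < |(x i : ℝ)| := by simpa [mem_QBox] using hx
  calc a / 2 < |(x i : ℝ)| := hi
    _ = ((x i).natAbs : ℝ) := by simp
    _ ≤ l1Norm x := by exact_mod_cast natAbs_le_l1Norm x i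

end Lattice

/-! ### The Dirichlet Hamiltonian -/

section Hamiltonian

variable {d : ℕ} {C : Finset (Fin d → ℤ)} {V f g : (Fin d → ℤ) → ℝ} {x x₀ : Fin d → ℤ} {lam : ℝ}

/-- The hopping term `∑_{y ∈ C, y ∼ x} f y` of the Laplacian with Dirichlet conditions outside `C`.
It is also meaningful at points `x ∉ C`. -/
def neighborSum (C : Finset (Fin d → ℤ)) (f : (Fin d → ℤ) → ℝ) (x : Fin d → ℤ) : ℝ :=
  ∑ y ∈ C, if Adj x y then f y else 0

lemma neighborSum_nonneg (hf : ∀ y, 0 ≤ f y) : 0 ≤ neighborSum C f x :=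
  sum_nonneg fun y _ => by split_ifs <;> simp [hf]

lemma neighborSum_le {b : ℝ} (hb : 0 ≤ b) (hf : ∀ y, Adj x y → f y ≤ b) :
    neighborSum C f x ≤ 2 * d * b :=
  calc neighborSum C f x = ∑ y ∈ C.filter (Adj x), f y := (sum_filter _ _).symm
    _ ≤ ∑ _y ∈ C.filter (Adj x), b := sum_le_sum fun y hy => hf y (mem_filter.1 hy).2
    _ = (C.filter (Adj x)).card * b := by rw [sum_const, nsmul_eq_mul]
    _ ≤ 2 * d * b := by gcongr; exact_mod_cast card_filter_adj_le C x

lemma sum_mul_neighborSum_comm :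
    ∑ x ∈ C, f x * neighborSum C g x = ∑ x ∈ C, neighborSum C f x * g x := by
  simp only [neighborSum, mul_sum, sum_mul]
  rw [sum_comm]
  refine sum_congr rfl fun x _ => sum_congr rfl fun y _ => ?_
  simp only [adj_comm (x := y), mul_ite, ite_mul, mul_zero, zero_mul]

lemma sum_mul_neighborSum_self_le :
    ∑ x ∈ C, f x * neighborSum C f x ≤ 2 * d * ∑ x ∈ C, f x ^ 2 := by
  have hdeg : ∀ x, neighborSum C 1 x ≤ 2 * d := fun x => by
    simpa using neighborSum_le (C := C) (x := x) (f := 1) zero_le_one fun _ _ => le_rfl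
  have hyoung : ∀ x, f x * neighborSum C f x
      ≤ (f x ^ 2 * neighborSum C 1 x + neighborSum C (f · ^ 2) x) / 2 := fun x => by
    rw [neighborSum, neighborSum, neighborSum, mul_sum, mul_sum, ← sum_add_distrib, sum_div]
    refine sum_le_sum fun y _ => ?_
    split_ifs
    · rw [Pi.one_apply]
      nlinarith [sq_nonneg (f x - f y)]
    · simp
  have hswap : ∑ x ∈ C, neighborSum C (f · ^ 2) x = ∑ x ∈ C, f x ^ 2 * neighborSum C 1 x := by
    simpa using (sum_mul_neighborSum_comm (C := C) (f := (f · ^ 2)) (g := 1)).symm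
  calc ∑ x ∈ C, f x * neighborSum C f x
      ≤ ∑ x ∈ C, (f x ^ 2 * neighborSum C 1 x + neighborSum C (f · ^ 2) x) / 2 :=
        sum_le_sum fun x _ => hyoung x
    _ = ∑ x ∈ C, f x ^ 2 * neighborSum C 1 x := by
        rw [← sum_div, sum_add_distrib, hswap]; ring
    _ ≤ ∑ x ∈ C, f x ^ 2 * (2 * d) := by gcongr; exact hdeg _
    _ = 2 * d * ∑ x ∈ C, f x ^ 2 := by rw [← sum_mul, mul_comm]

/-- The vector of `ℓ²(C)` given by the values on `C` of a function on `ℤ^d`. -/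
def toEllTwo (C : Finset (Fin d → ℤ)) : ((Fin d → ℤ) → ℝ) →ₗ[ℝ] EuclideanSpace ℝ C where
  toFun f := WithLp.toLp 2 fun x => f x
  map_add' _ _ := rfl
  map_smul' _ _ := rfl

@[simp]
lemma toEllTwo_apply (y : C) : toEllTwo C f y = f y := rfl

lemma toEllTwo_eq_iff : toEllTwo C f = toEllTwo C g ↔ ∀ x ∈ C, f x = g x :=
  ⟨fun h x hx => congrArg (· ⟨x, hx⟩) h, fun h => by ext y; exact h y y.2⟩

lemma exists_toEllTwo_eq (u : EuclideanSpace ℝ C) :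
    ∃ f, (∀ x ∉ C, f x = 0) ∧ toEllTwo C f = u := by
  refine ⟨fun x => if h : x ∈ C then u ⟨x, h⟩ else 0, fun x hx => dif_neg hx, ?_⟩
  ext y
  simp

lemma inner_toEllTwo : ⟪toEllTwo C f, toEllTwo C g⟫ = ∑ x ∈ C, f x * g x := by
  rw [← sum_coe_sort C fun x => f x * g x]
  simp [PiLp.inner_apply, mul_comm]

lemma norm_toEllTwo_sq : ‖toEllTwo C f‖ ^ 2 = ∑ x ∈ C, f x ^ 2 := by
  rw [← real_inner_self_eq_norm_sq, inner_toEllTwo]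
  simp only [sq]

/-- The Anderson Hamiltonian `Δ + V` on `ℓ²(C)` with Dirichlet boundary conditions. -/
def dirichletHamiltonian (C : Finset (Fin d → ℤ)) (V : (Fin d → ℤ) → ℝ) :
    EuclideanSpace ℝ C →ₗ[ℝ] EuclideanSpace ℝ C :=
  Matrix.toEuclideanLin <| .of fun x y : C =>
    (if Adj x.1 y.1 then 1 else 0) + if x = y then V x - 2 * d else 0

lemma dirichletHamiltonian_toEllTwo : dirichletHamiltonian C V (toEllTwo C f) =
    toEllTwo C fun x => neighborSum C f x + (V x - 2 * d) * f x := by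
  ext x
  simp [dirichletHamiltonian, Matrix.toLpLin_apply, Matrix.mulVec, dotProduct, add_mul,
    sum_add_distrib, neighborSum, ← sum_coe_sort C]

lemma dirichletHamiltonian_isSymmetric : (dirichletHamiltonian C V).IsSymmetric := by
  rw [dirichletHamiltonian, Matrix.isSymmetric_toEuclideanLin_iff]
  ext x y
  by_cases h : x = y
  · simp [h]
  · simp [h, Ne.symm h, adj_comm (x := x.1)]

lemma inner_dirichletHamiltonian_toEllTwo :
    ⟪toEllTwo C f, dirichletHamiltonian C V (toEllTwo C f)⟫ =
      ∑ x ∈ C, f x * neighborSum C f x + ∑ x ∈ C, (V x - 2 * d) * f x ^ 2 := by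
  rw [dirichletHamiltonian_toEllTwo, inner_toEllTwo, ← sum_add_distrib]
  exact sum_congr rfl fun x _ => by ring

lemma inner_dirichletHamiltonian_toEllTwo_le :
    ⟪toEllTwo C f, dirichletHamiltonian C V (toEllTwo C f)⟫ ≤ ∑ x ∈ C, V x * f x ^ 2 := by
  rw [inner_dirichletHamiltonian_toEllTwo]
  have hkin := sum_mul_neighborSum_self_le (C := C) (f := f)
  simp only [sub_mul, sum_sub_distrib, ← mul_sum]
  linarith

/-- On `C` the potential `V` is largest at `x₀`, by a margin of at least `G`. -/
structure IsPeak (C : Finset (Fin d → ℤ)) (V : (Fin d → ℤ) → ℝ) (x₀ : Fin d → ℤ) (G : ℝ) :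
    Prop where
  nonneg : 0 ≤ G
  apply_le : ∀ x ∈ C, x ≠ x₀ → V x ≤ V x₀ - G

lemma IsPeak.inner_dirichletHamiltonian_le {G : ℝ} {y : C} (hV : IsPeak C V y G)
    {ψ u : EuclideanSpace ℝ C} (hψ : ‖ψ‖ = 1) (hu : ⟪u, ψ⟫ = 0) :
    ⟪u, dirichletHamiltonian C V u⟫ ≤ (V y - G * ψ y ^ 2) * ‖u‖ ^ 2 := by
  have hG := hV.nonneg
  obtain ⟨f, -, rfl⟩ := exists_toEllTwo_eq u
  have hpt : ∀ x ∈ C, V x * f x ^ 2 ≤ (V y - G) * f x ^ 2 + if x = y then G * f x ^ 2 else 0 := by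
    intro x hx
    split_ifs with h
    · rw [h]; linarith
    · rw [add_zero]; gcongr; exact hV.apply_le x hx h
  have hy : f y ^ 2 ≤ (1 - ψ y ^ 2) * ‖toEllTwo C f‖ ^ 2 := by
    simpa [EuclideanSpace.inner_single_left, EuclideanSpace.inner_single_right] using
      sq_inner_le_of_inner_eq_zero hψ (e := EuclideanSpace.single y 1) (by simp) hu
  calc _ ≤ ∑ x ∈ C, V x * f x ^ 2 := inner_dirichletHamiltonian_toEllTwo_le
    _ ≤ ∑ x ∈ C, ((V y - G) * f x ^ 2 + if x = y then G * f x ^ 2 else 0) := sum_le_sum hpt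
    _ = (V y - G) * ‖toEllTwo C f‖ ^ 2 + G * f y ^ 2 := by
        rw [sum_add_distrib, ← mul_sum, norm_toEllTwo_sq, sum_ite_eq_of_mem' _ _ _ y.2]
    _ ≤ (V y - G) * ‖toEllTwo C f‖ ^ 2 + G * ((1 - ψ y ^ 2) * ‖toEllTwo C f‖ ^ 2) := by gcongr
    _ = (V y - G * ψ y ^ 2) * ‖toEllTwo C f‖ ^ 2 := by ring

lemma isDirichletEigenpair_iff : IsDirichletEigenpair C V lam f ↔
    (∀ x ∉ C, f x = 0) ∧
      dirichletHamiltonian C V (toEllTwo C f) = lam • toEllTwo C f := by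
  rw [dirichletHamiltonian_toEllTwo, ← map_smul, toEllTwo_eq_iff]
  refine and_congr_right fun _ => forall₂_congr fun x _ => ?_
  rw [← neighborSum, Pi.smul_apply, smul_eq_mul, sub_add_eq_add_sub, add_sub_assoc, ← sub_mul]

namespace IsPrincipalEigenpair

lemma eq_zero_of_notMem (h : IsPrincipalEigenpair C V lam f) (hx : x ∉ C) : f x = 0 := h.1.1 x hx

lemma nonneg (h : IsPrincipalEigenpair C V lam f) (x : Fin d → ℤ) : 0 ≤ f x := h.2.2.1 x

lemma neighborSum_add_eq (h : IsPrincipalEigenpair C V lam f) (hx : x ∈ C) :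
    neighborSum C f x + (V x - 2 * d) * f x = lam * f x := by
  rw [← h.1.2 x hx, neighborSum]; ring

lemma norm_toEllTwo (h : IsPrincipalEigenpair C V lam f) : ‖toEllTwo C f‖ = 1 :=
  (pow_eq_one_iff_of_nonneg (norm_nonneg _) two_ne_zero).1 (norm_toEllTwo_sq.trans h.2.1)

lemma apply_le_one (h : IsPrincipalEigenpair C V lam f) (x : Fin d → ℤ) : f x ≤ 1 := by
  by_cases hx : x ∈ C
  · refine (sq_le_one_iff₀ (h.nonneg x)).1 ?_
    rw [← h.2.1]
    exact single_le_sum (f := fun x => f x ^ 2) (fun _ _ => sq_nonneg _) hx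
  · rw [h.eq_zero_of_notMem hx]; exact zero_le_one

lemma inner_le (h : IsPrincipalEigenpair C V lam f) (u : EuclideanSpace ℝ C) :
    ⟪u, dirichletHamiltonian C V u⟫ ≤ lam * ‖u‖ ^ 2 := by
  refine inner_le_of_forall_hasEigenvalue_le dirichletHamiltonian_isSymmetric (fun ν hν => ?_) u
  obtain ⟨w, hw⟩ := hν.exists_hasEigenvector
  obtain ⟨g, hg, rfl⟩ := exists_toEllTwo_eq w
  refine h.2.2.2 ν g (fun h0 => hw.2 (by rw [h0, map_zero])) ?_
  exact isDirichletEigenpair_iff.2 ⟨hg, hw.apply_eq_smul⟩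

lemma sub_le_eigenvalue (h : IsPrincipalEigenpair C V lam f) (hx : x ∈ C) : V x - 2 * d ≤ lam := by
  have htest := h.inner_le (toEllTwo C (Pi.single x 1))
  have hn : (0 : ℝ) ≤ neighborSum C (Pi.single x 1) x :=
    neighborSum_nonneg (Pi.single_nonneg (α := fun _ => ℝ) |>.2 zero_le_one)
  rw [inner_dirichletHamiltonian_toEllTwo, norm_toEllTwo_sq] at htest
  have hform : neighborSum C (Pi.single x 1) x + (V x - 2 * d) ≤ lam := by
    simpa [Pi.single_apply, hx] using htest
  linarith

end IsPrincipalEigenpair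

end Hamiltonian

/-! ### Principal eigenfunctions in a potential well -/

section PotentialWell

/-- The depth function `W` of a potential well of `-W` on `B`: it vanishes at the bottom `0 ∈ B`
and is at least `k > 0` at all other sites. -/
structure IsPotentialWell {d : ℕ} (B : Finset (Fin d → ℤ)) (W : (Fin d → ℤ) → ℝ) (k : ℝ) :
    Prop where
  zero_mem : 0 ∈ B
  apply_zero : W 0 = 0
  pos : 0 < k
  le_apply : ∀ x ≠ 0, k ≤ W x

namespace IsPrincipalEigenpair

variable {d : ℕ} {B : Finset (Fin d → ℤ)} {W f : (Fin d → ℤ) → ℝ} {lam k : ℝ} {x : Fin d → ℤ}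

lemma mul_apply_le_neighborSum (h : IsPrincipalEigenpair B (-W) lam f) (h0 : 0 ∈ B) (hW0 : W 0 = 0)
    (hx : x ∈ B) : W x * f x ≤ neighborSum B f x := by
  have hlam : -(2 * d : ℝ) ≤ lam := by simpa [hW0] using h.sub_le_eigenvalue h0
  have heq := h.neighborSum_add_eq hx
  rw [Pi.neg_apply] at heq
  nlinarith [h.nonneg x]

lemma sum_mul_sq_le (h : IsPrincipalEigenpair B (-W) lam f) (h0 : 0 ∈ B) (hW0 : W 0 = 0) :
    ∑ x ∈ B, W x * f x ^ 2 ≤ 2 * d := by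
  have hlam : -(2 * d : ℝ) ≤ lam := by simpa [hW0] using h.sub_le_eigenvalue h0
  have henergy := inner_dirichletHamiltonian_toEllTwo_le (C := B) (V := -W) (f := f)
  rw [(isDirichletEigenpair_iff.1 h.1).2, inner_smul_right, real_inner_self_eq_norm_sq,
    norm_toEllTwo_sq, h.2.1] at henergy
  simp only [Pi.neg_apply, neg_mul, sum_neg_distrib] at henergy
  linarith

lemma one_sub_div_le_sq_apply_zero (h : IsPrincipalEigenpair B (-W) lam f)
    (hW : IsPotentialWell B W k) : 1 - 2 * d / k ≤ f 0 ^ 2 := by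
  have hoff : ∀ x ∈ B, k * f x ^ 2 ≤ W x * f x ^ 2 + if x = 0 then k * f x ^ 2 else 0 := by
    intro x _
    split_ifs with hx
    · simp [hx, hW.apply_zero]
    · rw [add_zero]; gcongr; exact hW.le_apply x hx
  have hsum : k ≤ 2 * d + k * f 0 ^ 2 :=
    calc k = ∑ x ∈ B, k * f x ^ 2 := by rw [← mul_sum, h.2.1, mul_one]
      _ ≤ ∑ x ∈ B, (W x * f x ^ 2 + if x = 0 then k * f x ^ 2 else 0) := sum_le_sum hoff
      _ ≤ 2 * d + k * f 0 ^ 2 := by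
          rw [sum_add_distrib, sum_ite_eq_of_mem' _ _ _ hW.zero_mem]
          gcongr
          exact h.sum_mul_sq_le hW.zero_mem hW.apply_zero
  rw [sub_le_iff_le_add, ← sub_le_iff_le_add', le_div_iff₀ hW.pos]
  linarith

lemma apply_le_pow (h : IsPrincipalEigenpair B (-W) lam f)
    (hW : IsPotentialWell B W k) {n : ℕ} (hn : n ≤ l1Norm x) : f x ≤ (2 * d / k) ^ n := by
  have hk := hW.pos
  induction n generalizing x with
  | zero => simpa using h.apply_le_one x
  | succ n ih =>
    by_cases hx : x ∈ B
    · have hx0 : x ≠ 0 := fun hx0 => by simp [l1Norm_eq_zero.2 hx0] at hn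
      have hstep : k * f x ≤ 2 * d * (2 * d / k) ^ n :=
        calc k * f x ≤ W x * f x := by gcongr; exacts [h.nonneg x, hW.le_apply x hx0]
          _ ≤ neighborSum B f x := h.mul_apply_le_neighborSum hW.zero_mem hW.apply_zero hx
          _ ≤ 2 * d * (2 * d / k) ^ n :=
              neighborSum_le (by positivity) fun y hy => ih (by linarith [hy.l1Norm_le])
      calc f x ≤ 2 * d * (2 * d / k) ^ n / k := by rwa [le_div_iff₀' hW.pos]
        _ = (2 * d / k) ^ (n + 1) := by ring
    · rw [h.eq_zero_of_notMem hx]; positivity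

lemma neighborSum_le_pow (h : IsPrincipalEigenpair B (-W) lam f)
    (hW : IsPotentialWell B W k) {n : ℕ} (hn : n < l1Norm x) :
    neighborSum B f x ≤ 2 * d * (2 * d / k) ^ n := by
  have hk := hW.pos
  exact neighborSum_le (by positivity) fun y hy => h.apply_le_pow hW (by linarith [hy.l1Norm_le])

lemma neighborSum_le_half_pow (h : IsPrincipalEigenpair B (-W) lam f)
    (hW : IsPotentialWell B W k) (hk2 : 2 * d / k ≤ 1 / 2) (hx : x ≠ 0) :
    neighborSum B f x ≤ 4 * d * (1 / 2) ^ l1Norm x := by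
  have hk := hW.pos
  obtain ⟨n, hn⟩ := Nat.exists_eq_succ_of_ne_zero (mt l1Norm_eq_zero.1 hx)
  calc neighborSum B f x ≤ 2 * d * (2 * d / k) ^ n :=
        h.neighborSum_le_pow hW (by omega)
    _ ≤ 2 * d * (1 / 2) ^ n := by gcongr
    _ = 4 * d * (1 / 2) ^ l1Norm x := by rw [hn, pow_succ]; ring

lemma mul_sq_apply_le (h : IsPrincipalEigenpair B (-W) lam f)
    (hW : IsPotentialWell B W k) (hk2 : 2 * d / k ≤ 1 / 2) (hx : x ∈ B) :
    W x * f x ^ 2 ≤ 4 * d * (2 * d / k) * (1 / 2) ^ l1Norm x := by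
  have hk := hW.pos
  rcases eq_or_ne x 0 with rfl | hx0
  · rw [hW.apply_zero, zero_mul]; positivity
  obtain ⟨n, hn⟩ := Nat.exists_eq_succ_of_ne_zero (mt l1Norm_eq_zero.1 hx0)
  have hWf : W x * f x ≤ 2 * d * 1 :=
    (h.mul_apply_le_neighborSum hW.zero_mem hW.apply_zero hx).trans
      (neighborSum_le zero_le_one fun y _ => h.apply_le_one y)
  have hf : f x ≤ (2 * d / k) * (1 / 2) ^ n :=
    calc f x ≤ (2 * d / k) ^ (n + 1) := h.apply_le_pow hW hn.ge
      _ = (2 * d / k) * (2 * d / k) ^ n := pow_succ' _ _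
      _ ≤ (2 * d / k) * (1 / 2) ^ n := by gcongr
  calc W x * f x ^ 2 = W x * f x * f x := by ring
    _ ≤ 2 * d * 1 * ((2 * d / k) * (1 / 2) ^ n) := by
        gcongr
        exact h.nonneg x
    _ = 4 * d * (2 * d / k) * (1 / 2) ^ l1Norm x := by rw [hn, Nat.succ_eq_add_one]; ring

lemma sum_mul_sq_le_of_div_le_half (h : IsPrincipalEigenpair B (-W) lam f)
    (hW : IsPotentialWell B W k) (hk2 : 2 * d / k ≤ 1 / 2) :
    ∑ x ∈ B, W x * f x ^ 2 ≤ 4 * d * (2 * d / k) * 3 ^ d := by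
  have hk := hW.pos
  calc ∑ x ∈ B, W x * f x ^ 2 ≤ ∑ x ∈ B, 4 * d * (2 * d / k) * (1 / 2) ^ l1Norm x :=
        sum_le_sum fun _ hx => h.mul_sq_apply_le hW hk2 hx
    _ = 4 * d * (2 * d / k) * ∑ x ∈ B, (1 / 2) ^ l1Norm x := (mul_sum _ _ _).symm
    _ ≤ 4 * d * (2 * d / k) * 3 ^ d := by gcongr; exact sum_half_pow_l1Norm_le B

end IsPrincipalEigenpair

end PotentialWell

/-! ### Translated eigenfunctions as quasimodes -/

section Transplant

variable {d : ℕ} {B C : Finset (Fin d → ℤ)} {V V₀ W f φ : (Fin d → ℤ) → ℝ} {x x₀ : Fin d → ℤ}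
  {lam lam₀ k G g : ℝ}

lemma sum_comp_sub_eq_sum {F : (Fin d → ℤ) → ℝ} (hF : ∀ y ∉ B, F y = 0)
    (hBC : ∀ y ∈ B, y + x₀ ∈ C) : ∑ x ∈ C, F (x - x₀) = ∑ y ∈ B, F y :=
  calc ∑ x ∈ C, F (x - x₀) = ∑ x ∈ B.map (addRightEmbedding x₀), F (x - x₀) := by
        refine (sum_subset (fun x hx => ?_) fun x _ hx => hF _ fun hB => hx ?_).symm
        · obtain ⟨y, hy, rfl⟩ := mem_map.1 hx
          exact hBC y hy
        · exact mem_map.2 ⟨x - x₀, hB, sub_add_cancel x x₀⟩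
    _ = ∑ y ∈ B, F y := by simp

lemma neighborSum_translate (hf : ∀ y ∉ B, f y = 0) (hBC : ∀ y ∈ B, y + x₀ ∈ C) :
    neighborSum C (fun y => f (y - x₀)) x = neighborSum B f (x - x₀) := by
  rw [neighborSum, neighborSum, ← sum_comp_sub_eq_sum (fun y hy => by simp [hf y hy]) hBC]
  simp only [adj_sub_right]

/-- The value at `x` of `(Δ + V - ν) ψ` for the translate `ψ = f(· - x₀)` of an eigenfunction `f` of
`Δ + V₀` on `B` with eigenvalue `lam₀`, where `ν = lam₀ + V x₀`. Outside of `B + x₀` only the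
hopping term across the boundary survives. -/
def transplantDefect (B : Finset (Fin d → ℤ)) (V₀ V f : (Fin d → ℤ) → ℝ) (x₀ x : Fin d → ℤ) : ℝ :=
  if x - x₀ ∈ B then (V x - V x₀ - V₀ (x - x₀)) * f (x - x₀) else neighborSum B f (x - x₀)

namespace IsPrincipalEigenpair

lemma norm_toEllTwo_translate (h₀ : IsPrincipalEigenpair B V₀ lam₀ f)
    (hBC : ∀ y ∈ B, y + x₀ ∈ C) : ‖toEllTwo C fun x => f (x - x₀)‖ = 1 := by
  rw [← pow_eq_one_iff_of_nonneg (norm_nonneg _) two_ne_zero, norm_toEllTwo_sq, ← h₀.2.1]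
  exact sum_comp_sub_eq_sum (F := (f · ^ 2)) (fun y hy => by simp [h₀.eq_zero_of_notMem hy]) hBC

lemma dirichletHamiltonian_translate (h₀ : IsPrincipalEigenpair B V₀ lam₀ f)
    (hBC : ∀ y ∈ B, y + x₀ ∈ C) :
    dirichletHamiltonian C V (toEllTwo C fun x => f (x - x₀)) -
        (lam₀ + V x₀) • toEllTwo C (fun x => f (x - x₀)) =
      toEllTwo C (transplantDefect B V₀ V f x₀) := by
  rw [dirichletHamiltonian_toEllTwo, ← map_smul, ← map_sub, toEllTwo_eq_iff]
  intro x _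
  simp only [Pi.sub_apply, Pi.smul_apply, smul_eq_mul, transplantDefect,
    neighborSum_translate h₀.1.1 hBC]
  split_ifs with hx
  · linear_combination h₀.neighborSum_add_eq hx
  · rw [h₀.eq_zero_of_notMem hx]; ring

lemma inner_dirichletHamiltonian_translate (h₀ : IsPrincipalEigenpair B V₀ lam₀ f)
    (hBC : ∀ y ∈ B, y + x₀ ∈ C) :
    ⟪toEllTwo C (fun x => f (x - x₀)),
        dirichletHamiltonian C V (toEllTwo C fun x => f (x - x₀))⟫ =
      lam₀ + ∑ y ∈ B, (V (y + x₀) - V₀ y) * f y ^ 2 := by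
  rw [dirichletHamiltonian_toEllTwo, inner_toEllTwo]
  simp only [neighborSum_translate h₀.1.1 hBC]
  calc _ = ∑ y ∈ B, f y * (neighborSum B f y + (V (y + x₀) - 2 * d) * f y) := by
        rw [← sum_comp_sub_eq_sum (fun y hy => by simp [h₀.eq_zero_of_notMem hy]) hBC]
        simp only [sub_add_cancel]
    _ = ∑ y ∈ B, (lam₀ * f y ^ 2 + (V (y + x₀) - V₀ y) * f y ^ 2) :=
        sum_congr rfl fun y hy => by linear_combination f y * h₀.neighborSum_add_eq hy
    _ = lam₀ + ∑ y ∈ B, (V (y + x₀) - V₀ y) * f y ^ 2 := by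
        rw [sum_add_distrib, ← mul_sum, h₀.2.1, mul_one]

lemma inner_le_of_inner_translate_eq_zero
    (h : IsPrincipalEigenpair C V lam φ) (h₀ : IsPrincipalEigenpair B (-W) lam₀ f)
    (hW : IsPotentialWell B W k) (hBC : ∀ y ∈ B, y + x₀ ∈ C) (hV : IsPeak C V x₀ G)
    (hgG : g + 2 * d ≤ G * (1 - 2 * d / k))
    (u : EuclideanSpace ℝ C) (hu : ⟪u, toEllTwo C fun x => f (x - x₀)⟫ = 0) :
    ⟪u, dirichletHamiltonian C V u⟫ ≤ (lam - g) * ‖u‖ ^ 2 := by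
  have hx₀ : x₀ ∈ C := by simpa using hBC 0 hW.zero_mem
  have hlam := h.sub_le_eigenvalue hx₀
  have hf0 : G * (1 - 2 * d / k) ≤ G * f (x₀ - x₀) ^ 2 := by
    rw [sub_self]
    gcongr
    · exact hV.nonneg
    · exact h₀.one_sub_div_le_sq_apply_zero hW
  calc _ ≤ (V x₀ - G * f (x₀ - x₀) ^ 2) * ‖u‖ ^ 2 :=
        IsPeak.inner_dirichletHamiltonian_le (y := ⟨x₀, hx₀⟩) hV
          (h₀.norm_toEllTwo_translate hBC) hu
    _ ≤ (lam - g) * ‖u‖ ^ 2 := by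
        refine mul_le_mul_of_nonneg_right ?_ (sq_nonneg _)
        linarith

theorem abs_sub_le_of_potentialWell
    (h : IsPrincipalEigenpair C V lam φ) (h₀ : IsPrincipalEigenpair B (-W) lam₀ f)
    (hW : IsPotentialWell B W k) (hBC : ∀ y ∈ B, y + x₀ ∈ C) (hV : IsPeak C V x₀ G)
    (hg : 0 < g) (hgG : g + 2 * d ≤ G * (1 - 2 * d / k)) :
    |lam - (lam₀ + ∑ y ∈ B, (V (y + x₀) + W y) * f y ^ 2)| ≤
      (∑ x ∈ C, transplantDefect B (-W) V f x₀ x ^ 2) / g := by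
  have hq := abs_sub_inner_le_of_quasimode dirichletHamiltonian_isSymmetric
    (isDirichletEigenpair_iff.1 h.1).2 h.norm_toEllTwo (h₀.norm_toEllTwo_translate hBC)
    (inner_toEllTwo.symm ▸ sum_nonneg fun x _ => mul_nonneg (h.nonneg x) (h₀.nonneg _)) hg
    (h.inner_le_of_inner_translate_eq_zero h₀ hW hBC hV hgG) (lam₀ + V x₀)
  rw [h₀.dirichletHamiltonian_translate hBC, norm_toEllTwo_sq,
    h₀.inner_dirichletHamiltonian_translate hBC] at hq
  simpa only [Pi.neg_apply, sub_neg_eq_add] using hq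

theorem sum_sub_sq_le_of_potentialWell
    (h : IsPrincipalEigenpair C V lam φ) (h₀ : IsPrincipalEigenpair B (-W) lam₀ f)
    (hW : IsPotentialWell B W k) (hBC : ∀ y ∈ B, y + x₀ ∈ C) (hV : IsPeak C V x₀ G)
    (hg : 0 < g) (hgG : g + 2 * d ≤ G * (1 - 2 * d / k)) :
    ∑ x ∈ C, (φ x - f (x - x₀)) ^ 2 ≤
      2 * (∑ x ∈ C, transplantDefect B (-W) V f x₀ x ^ 2) / g ^ 2 := by
  have hq := norm_sub_sq_le_of_quasimode
    (isDirichletEigenpair_iff.1 h.1).2 h.norm_toEllTwo (h₀.norm_toEllTwo_translate hBC)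
    (inner_toEllTwo.symm ▸ sum_nonneg fun x _ => mul_nonneg (h.nonneg x) (h₀.nonneg _)) hg
    (h.inner_le_of_inner_translate_eq_zero h₀ hW hBC hV hgG) (lam₀ + V x₀)
  rwa [h₀.dirichletHamiltonian_translate hBC, norm_toEllTwo_sq, ← map_sub, norm_toEllTwo_sq] at hq

end IsPrincipalEigenpair

end Transplant

/-! ### The Gaussian field on the event `E_{L,x₀}(κ)` -/

section Field

/-- A constant such that the squared transplant defect at `x` is at most this times
`errorScale * 2 ^ (-|x - x₀|₁)`. -/
def defectConst (d : ℕ) (c c' : ℝ) : ℝ :=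
  8 * ((2 * d / c) ^ 2 * Real.exp c') + 32 * d ^ 2 * (2 * d + 1) ^ 2 + 32 * d ^ 2

lemma defectConst_nonneg (d : ℕ) (c c' : ℝ) : 0 ≤ defectConst d c c' := by
  unfold defectConst; positivity

lemma sq_inv_rpow_le_pow {ε κ h : ℝ} {n : ℕ} (hε : 0 < ε) (hε1 : ε ≤ 1) (hκ : 0 ≤ κ) (hn : h ≤ n) :
    (ε⁻¹ ^ (κ * h)) ^ 2 ≤ (ε ^ (-2 * κ)) ^ n := by
  have hmono : ε⁻¹ ^ (κ * h) ≤ ε⁻¹ ^ (κ * n) :=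
    Real.rpow_le_rpow_of_exponent_le ((one_le_inv₀ hε).2 hε1) (by gcongr)
  calc (ε⁻¹ ^ (κ * h)) ^ 2 ≤ (ε⁻¹ ^ (κ * n)) ^ 2 := by gcongr
    _ = (ε ^ (-2 * κ)) ^ n := by
      rw [Real.inv_rpow hε.le, ← Real.rpow_neg hε.le, ← Real.rpow_mul_natCast hε.le,
        ← Real.rpow_mul_natCast hε.le]
      congr 1
      push_cast
      ring

lemma half_pow_le_two_div {a : ℝ} {n : ℕ} (ha : 0 < a) (hn : a / 2 ≤ n) :
    (1 / 2 : ℝ) ^ n ≤ 2 / a := by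
  have hlt : (n : ℝ) < 2 ^ n := by exact_mod_cast Nat.lt_two_pow_self
  rw [div_pow, one_pow, div_le_div_iff₀ (by positivity) ha]
  linarith

namespace GaussSetting

variable {d : ℕ} {Ω : Type} [MeasurableSpace Ω] {S : GaussSetting d Ω} {L : ℕ} {c c' : ℝ}
  {x x₀ : Fin d → ℤ} {ω : Ω}

lemma one_le_dL (hL : 2 ≤ L) : 1 ≤ S.dL L := by
  obtain ⟨x, _, hx⟩ := (S.dL_def L hL).1
  have hle : 1 / S.dL L ≤ 1 := by linarith [S.v_nonneg L x]
  rwa [div_le_one (S.dL_pos L hL)] at hle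

variable (S L) in
/-- The small parameter `d_L / a_L` of the approximation. -/
def ratio : ℝ := S.dL L / S.aL L

lemma ratio_pos (hL : 2 ≤ L) : 0 < S.ratio L := div_pos (S.dL_pos L hL) (S.aL_pos L hL)

lemma tendsto_aL_atTop (hA : S.Assumption1) : Tendsto S.aL atTop atTop := by
  have hpos : ∀ᶠ L in atTop, 0 < S.aL L := (eventually_ge_atTop 2).mono S.aL_pos
  have hle : ∀ᶠ L in atTop, (S.aL L)⁻¹ ≤ S.dL L / S.aL L :=
    (eventually_ge_atTop 2).mono fun L hL => by
      rw [inv_eq_one_div]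
      exact div_le_div_of_nonneg_right (one_le_dL hL) (S.aL_pos L hL).le
  have hinv : Tendsto (fun L => (S.aL L)⁻¹) atTop (nhdsWithin 0 (Set.Ioi 0)) :=
    tendsto_nhdsWithin_iff.2 ⟨squeeze_zero' (hpos.mono fun L h => (inv_pos.2 h).le) hle hA,
      hpos.mono fun L h => inv_pos.2 h⟩
  exact (tendsto_inv_nhdsGT_zero.comp hinv).congr fun L => inv_inv _

lemma shape_zero : S.shape L 0 = 0 := by simp [shape, S.v_zero]

lemma zeta_self : S.zeta L x₀ x₀ ω = 0 := by simp [zeta, S.v_zero]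

lemma ξ_sub_add_shape :
    S.ξ L ω x - S.ξ L ω x₀ + S.shape L (x - x₀) =
      S.zeta L x₀ x ω - (S.ξ L ω x₀ - S.aL L) * (1 - S.v L (x - x₀)) := by
  rw [zeta, shape]; ring

lemma variance_zeta (hL : 2 ≤ L) (hx : x ≠ x₀) :
    variance (S.zeta L x₀ x) S.P = max (1 - S.v L (x - x₀) * S.v L (x₀ - x)) 0 := by
  have hmeas : Measurable (S.zeta L x₀ x) := (S.meas L x).sub ((S.meas L x₀).mul_const _)
  have hlaw := S.gaussian L hL {x, x₀} (Function.update 1 x₀ (-S.v L (x - x₀)))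
  have hcomb : S.zeta L x₀ x = fun ω => ∑ y ∈ {x, x₀},
      Function.update (1 : (Fin d → ℤ) → ℝ) x₀ (-S.v L (x - x₀)) y * S.ξ L ω y := by
    funext ω
    simp only [zeta, sum_pair hx, Function.update_of_ne hx, Function.update_self, Pi.one_apply]
    ring
  rw [← variance_id_map hmeas.aemeasurable, hcomb, hlaw, variance_id_gaussianReal,
    Real.coe_toNNReal']
  simp only [sum_pair hx, Function.update_of_ne hx, Function.update_self, Pi.one_apply, sub_self,
    S.v_zero]
  ring_nf

namespace ShortRangeDecay

lemma div_ratio_le_shape (hS : S.ShortRangeDecay c c') (hL : 2 ≤ L) (hx : x ≠ 0) :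
    c / S.ratio L ≤ S.shape L x := by
  have ha := S.aL_pos L hL
  calc c / S.ratio L = S.aL L * (c / S.dL L) := by rw [ratio, div_div_eq_mul_div]; ring
    _ ≤ S.shape L x := by
        rw [shape]
        gcongr
        linarith [(hS.2.2 L hL x hx).2]

lemma isPotentialWell_shape (hS : S.ShortRangeDecay c c') (hL : 2 ≤ L) {r : ℝ} (hr : 0 ≤ r) :
    IsPotentialWell (QBox d r) (S.shape L) (c / S.ratio L) where
  zero_mem := zero_mem_QBox hr
  apply_zero := shape_zero
  pos := div_pos hS.1 (ratio_pos hL)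
  le_apply _ hx := hS.div_ratio_le_shape hL hx

lemma shape_nonneg (hS : S.ShortRangeDecay c c') (hL : 2 ≤ L) (x : Fin d → ℤ) :
    0 ≤ S.shape L x := by
  rcases eq_or_ne x 0 with rfl | hx
  · exact shape_zero.ge
  · exact (div_pos hS.1 (ratio_pos hL)).le.trans (hS.div_ratio_le_shape hL hx)

lemma v_le_one (hS : S.ShortRangeDecay c c') (hL : 2 ≤ L) (x : Fin d → ℤ) : S.v L x ≤ 1 :=
  sub_nonneg.1 (nonneg_of_mul_nonneg_right (hS.shape_nonneg hL x) (S.aL_pos L hL))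

lemma variance_zeta_le (hS : S.ShortRangeDecay c c') (hL : 2 ≤ L) (hx : x ≠ x₀) :
    variance (S.zeta L x₀ x) S.P ≤ 2 * Real.exp (c' * znorm (x - x₀)) / S.dL L := by
  have hd := S.dL_pos L hL
  have h1 := (hS.2.2 L hL (x - x₀) (sub_ne_zero.2 hx)).1
  have h2 := (hS.2.2 L hL (x₀ - x) (sub_ne_zero.2 hx.symm)).1
  rw [← znorm_neg, neg_sub] at h2
  rw [variance_zeta hL hx, mul_div_assoc]
  refine max_le ?_ (by positivity)
  nlinarith [S.v_nonneg L (x₀ - x), hS.v_le_one hL (x - x₀), hS.v_le_one hL (x₀ - x)]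

end ShortRangeDecay

/-- Largeness of `L`, quantitatively: what the estimates on the event `E_{L,x₀}` need once the
short-range decay holds with constants `c`, `c'`. -/
structure IsLargeScale (S : GaussSetting d Ω) (c c' : ℝ) (L : ℕ) : Prop where
  two_le : 2 ≤ L
  ratio_le_one : S.ratio L ≤ 1
  two_mul_div_le : 2 * d / (c / S.ratio L) ≤ 1 / 8
  sq_mul_exp_mul_ratio_le : (2 * d / c) ^ 2 * Real.exp c' * S.ratio L ≤ 1 / 2
  five_mul_le_aL : 5 * (2 * d + 1) ≤ S.aL L

lemma IsLargeScale.div_four_add_le (hL : S.IsLargeScale c c' L) (hk : 0 < c / S.ratio L) :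
    c / S.ratio L / 4 + 2 * d ≤ c / S.ratio L / 2 * (1 - 2 * d / (c / S.ratio L)) := by
  have hd : 2 * d ≤ 1 / 8 * (c / S.ratio L) := (div_le_iff₀ hk).1 hL.two_mul_div_le
  generalize c / S.ratio L = k at hk hd ⊢
  have hcancel : k / 2 * (2 * d / k) = d := by field_simp
  rw [mul_sub, mul_one, hcancel]
  linarith

lemma eventually_isLargeScale (hA : S.Assumption1) (c c' : ℝ) :
    ∀ᶠ L in atTop, S.IsLargeScale c c' L := by
  have hsmall : ∀ A B : ℝ, 0 < B → ∀ᶠ L in atTop, A * S.ratio L ≤ B := by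
    intro A B hB
    have hlim := hA.const_mul A
    rw [mul_zero] at hlim
    exact hlim.eventually_le_const hB
  filter_upwards [eventually_ge_atTop 2, hsmall 1 1 one_pos, hsmall (2 * d / c) (1 / 8) (by simp),
    hsmall ((2 * d / c) ^ 2 * Real.exp c') (1 / 2) (by simp),
    (tendsto_aL_atTop hA).eventually_ge_atTop (5 * (2 * d + 1))] with L h1 h2 h3 h4 h5
  exact ⟨h1, by simpa using h2, by rwa [div_div_eq_mul_div, mul_div_right_comm], h4, h5⟩

variable (S) in
/-- The quantity `(d_L/a_L)^{1-2κ} |ξ_L(x₀) - a_L| + 1/a_L` that governs both errors. -/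
def errorScale (κ : ℝ) (L : ℕ) (x₀ : Fin d → ℤ) (ω : Ω) : ℝ :=
  S.ratio L ^ (1 - 2 * κ) * |S.ξ L ω x₀ - S.aL L| + 1 / S.aL L

lemma inv_aL_le_errorScale (κ : ℝ) (hL : 2 ≤ L) : 1 / S.aL L ≤ S.errorScale κ L x₀ ω := by
  have := ratio_pos (S := S) hL
  exact le_add_of_nonneg_left (by positivity)

lemma errorScale_nonneg (κ : ℝ) (hL : 2 ≤ L) : 0 ≤ S.errorScale κ L x₀ ω :=
  (one_div_pos.2 (S.aL_pos L hL)).le.trans (inv_aL_le_errorScale κ hL)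

lemma isPeak_of_mem_EventE (hS : S.ShortRangeDecay c c') (hL : S.IsLargeScale c c' L) {R : ℕ → ℝ}
    {r κ : ℝ} (hr : 0 ≤ r) (hx₀ : x₀ ∈ QBox d (R L - r)) (hω : ω ∈ EventE S R κ L x₀) :
    IsPeak (QBox d (R L)) (S.ξ L ω) x₀ (c / S.ratio L / 2) where
  nonneg := (half_pos (div_pos hS.1 (ratio_pos hL.two_le))).le
  apply_le x hx hne := by
    have hmem : x - x₀ ∈ QBox d (2 * R L) := by
      have hsub := add_mem_QBox hx (neg_mem_QBox.2 hx₀)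
      rw [← sub_eq_add_neg] at hsub
      exact QBox_mono (by linarith) hsub
    have hζ := (abs_le.1 (hω.1.2 x (mem_QBoxAt.2 hmem))).2
    have hξ : |S.ξ L ω x₀ - S.aL L| < 2 * d + 1 := hω.1.1
    have hs := hS.div_ratio_le_shape hL.two_le (sub_ne_zero.2 hne)
    have hv := sub_nonneg.2 (hS.v_le_one hL.two_le (x - x₀))
    have ha := hL.five_mul_le_aL
    have hdecomp := ξ_sub_add_shape (S := S) (L := L) (x := x) (x₀ := x₀) (ω := ω)
    have hdev : -(S.shape L (x - x₀) / 5) ≤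
        (S.ξ L ω x₀ - S.aL L) * (1 - S.v L (x - x₀)) := by
      rw [shape]
      nlinarith [(abs_lt.1 hξ).1]
    linarith [hS.shape_nonneg hL.two_le (x - x₀)]

lemma sq_zeta_le_of_mem_EventE3 (hS : S.ShortRangeDecay c c') (hL : 2 ≤ L)
    (hε : S.ratio L ≤ 1) {R : ℕ → ℝ} {κ : ℝ} (hκ : 0 ≤ κ) (hω : ω ∈ EventE3 S R κ L x₀)
    (hx : x ∈ QBoxAt (R L) x₀) (hne : x ≠ x₀) :
    S.zeta L x₀ x ω ^ 2 ≤
      2 / S.dL L * (Real.exp c' * S.ratio L ^ (-2 * κ)) ^ l1Norm (x - x₀) *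
        (1 + |S.ξ L ω x₀ - S.aL L| * S.aL L) := by
  have hd := S.dL_pos L hL
  have ha := S.aL_pos L hL
  have hpos := ratio_pos (S := S) hL
  have hc' := hS.2.1
  set n := l1Norm (x - x₀)
  have hn : znorm (x - x₀) ≤ n := znorm_le_l1Norm _
  have hvar : variance (S.zeta L x₀ x) S.P ≤ 2 / S.dL L * Real.exp c' ^ n :=
    calc _ ≤ 2 * Real.exp (c' * znorm (x - x₀)) / S.dL L := hS.variance_zeta_le hL hne
      _ ≤ 2 * Real.exp (n * c') / S.dL L := by rw [mul_comm c']; gcongr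
      _ = 2 / S.dL L * Real.exp c' ^ n := by rw [Real.exp_nat_mul]; ring
  have hmax : max 1 (|S.ξ L ω x₀ - S.aL L| * S.aL L) ≤ 1 + |S.ξ L ω x₀ - S.aL L| * S.aL L :=
    max_le_add_of_nonneg zero_le_one (by positivity)
  have hbound := hω x hx hne
  rw [← inv_div (S.dL L)] at hbound
  calc S.zeta L x₀ x ω ^ 2 = |S.zeta L x₀ x ω| ^ 2 := (sq_abs _).symm
    _ ≤ _ := pow_le_pow_left₀ (abs_nonneg _) hbound 2
    _ = variance (S.zeta L x₀ x) S.P * ((S.ratio L)⁻¹ ^ (κ * znorm (x - x₀))) ^ 2 *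
          max 1 (|S.ξ L ω x₀ - S.aL L| * S.aL L) := by
        rw [mul_pow, mul_pow, Real.sq_sqrt (variance_nonneg _ _),
          Real.sq_sqrt (zero_le_one.trans (le_max_left _ _)), ratio]
    _ ≤ 2 / S.dL L * Real.exp c' ^ n * (S.ratio L ^ (-2 * κ)) ^ n *
          (1 + |S.ξ L ω x₀ - S.aL L| * S.aL L) := by
        gcongr
        exact sq_inv_rpow_le_pow hpos hε hκ hn
    _ = _ := by rw [mul_pow]; ring

lemma div_aL_mul_add_le (κ : ℝ) (hL : 2 ≤ L) (hε : S.ratio L ≤ 1) (hκ : κ ≤ 1 / 2) :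
    S.ratio L ^ (1 - 2 * κ) / S.aL L * (1 + |S.ξ L ω x₀ - S.aL L| * S.aL L) ≤
      S.errorScale κ L x₀ ω := by
  have ha := S.aL_pos L hL
  have hw : S.ratio L ^ (1 - 2 * κ) ≤ 1 :=
    Real.rpow_le_one (ratio_pos hL).le hε (by linarith)
  calc _ = S.ratio L ^ (1 - 2 * κ) * |S.ξ L ω x₀ - S.aL L| + S.ratio L ^ (1 - 2 * κ) / S.aL L := by
        field_simp; ring
    _ ≤ S.errorScale κ L x₀ ω := by unfold errorScale; gcongr

end GaussSetting

namespace IsPrincipalEigenpair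

open GaussSetting

variable {d : ℕ} {Ω : Type} [MeasurableSpace Ω] {S : GaussSetting d Ω} {L : ℕ}
  {c c' κ ρ lam lam₀ : ℝ} {R : ℕ → ℝ} {f φ : (Fin d → ℤ) → ℝ} {x x₀ : Fin d → ℤ} {ω : Ω}

lemma sq_zeta_mul_apply_le_pow (h₀ : IsPrincipalEigenpair (QBox d ρ) (-S.shape L) lam₀ f)
    (hS : S.ShortRangeDecay c c') (hL : 2 ≤ L) (hε1 : S.ratio L ≤ 1) (hκ : 0 ≤ κ)
    (hρ : 0 ≤ ρ) (hω : ω ∈ EventE3 S R κ L x₀) (hx : x ∈ QBoxAt (R L) x₀) (hne : x ≠ x₀) :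
    (S.zeta L x₀ x ω * f (x - x₀)) ^ 2 ≤
      2 / S.dL L * (1 + |S.ξ L ω x₀ - S.aL L| * S.aL L) *
        ((2 * d / c) ^ 2 * Real.exp c' * S.ratio L * S.ratio L ^ (1 - 2 * κ)) ^
          l1Norm (x - x₀) := by
  have hε := ratio_pos (S := S) hL
  have hd := S.dL_pos L hL
  have ha := S.aL_pos L hL
  have hf : f (x - x₀) ^ 2 ≤ ((2 * d / (c / S.ratio L)) ^ 2) ^ l1Norm (x - x₀) := by
    rw [pow_right_comm]
    exact pow_le_pow_left₀ (h₀.nonneg _)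
      (h₀.apply_le_pow (hS.isPotentialWell_shape hL hρ) le_rfl) 2
  have hgeom : Real.exp c' * S.ratio L ^ (-2 * κ) * (2 * d / (c / S.ratio L)) ^ 2 =
      (2 * d / c) ^ 2 * Real.exp c' * S.ratio L * S.ratio L ^ (1 - 2 * κ) := by
    rw [sub_eq_add_neg, Real.rpow_add hε, Real.rpow_one, div_div_eq_mul_div, neg_mul]
    ring
  calc _ = S.zeta L x₀ x ω ^ 2 * f (x - x₀) ^ 2 := mul_pow _ _ _
    _ ≤ 2 / S.dL L * (Real.exp c' * S.ratio L ^ (-2 * κ)) ^ l1Norm (x - x₀) *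
          (1 + |S.ξ L ω x₀ - S.aL L| * S.aL L) *
            ((2 * d / (c / S.ratio L)) ^ 2) ^ l1Norm (x - x₀) :=
        mul_le_mul (sq_zeta_le_of_mem_EventE3 hS hL hε1 hκ hω hx hne) hf (sq_nonneg _)
          (by positivity)
    _ = _ := by rw [← hgeom, mul_pow]; ring

lemma sq_zeta_mul_apply_le (h₀ : IsPrincipalEigenpair (QBox d ρ) (-S.shape L) lam₀ f)
    (hS : S.ShortRangeDecay c c') (hL : S.IsLargeScale c c' L) (hκ0 : 0 ≤ κ) (hκ : κ ≤ 1 / 2)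
    (hρ : 0 ≤ ρ) (hω : ω ∈ EventE3 S R κ L x₀) (hx : x ∈ QBoxAt (R L) x₀) :
    (S.zeta L x₀ x ω * f (x - x₀)) ^ 2 ≤
      4 * ((2 * d / c) ^ 2 * Real.exp c') * S.errorScale κ L x₀ ω *
        (1 / 2) ^ l1Norm (x - x₀) := by
  have hT := errorScale_nonneg (S := S) (x₀ := x₀) (ω := ω) κ hL.two_le
  rcases eq_or_ne x x₀ with rfl | hne
  · rw [zeta_self, zero_mul, zero_pow two_ne_zero]; positivity
  have hε := ratio_pos (S := S) hL.two_le
  have hd := S.dL_pos L hL.two_le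
  have ha := S.aL_pos L hL.two_le
  have hzeta := h₀.sq_zeta_mul_apply_le_pow hS hL.two_le hL.ratio_le_one hκ0 hρ hω hx hne
  obtain ⟨n, hn⟩ := Nat.exists_eq_add_one_of_ne_zero (mt l1Norm_eq_zero.1 (sub_ne_zero.2 hne))
  rw [hn] at hzeta ⊢
  set b := (2 * d / c) ^ 2 * Real.exp c'
  set w := S.ratio L ^ (1 - 2 * κ)
  have hq : b * S.ratio L * w ≤ 1 / 2 :=
    calc b * S.ratio L * w ≤ b * S.ratio L * 1 := by
          gcongr; exact Real.rpow_le_one hε.le hL.ratio_le_one (by linarith)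
      _ ≤ 1 / 2 := by rw [mul_one]; exact hL.sq_mul_exp_mul_ratio_le
  have hratio : S.ratio L / S.dL L = 1 / S.aL L := by rw [ratio]; field_simp
  set t := 1 + |S.ξ L ω x₀ - S.aL L| * S.aL L
  calc _ ≤ 2 / S.dL L * t * ((b * S.ratio L * w) * (b * S.ratio L * w) ^ n) := by
        rwa [← pow_succ']
    _ ≤ 2 / S.dL L * t * ((b * S.ratio L * w) * (1 / 2) ^ n) := by gcongr
    _ = 4 * b * (w / S.aL L * t) * (1 / 2) ^ (n + 1) := by
        linear_combination 2 * b * w * (1 / 2) ^ n * t * hratio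
    _ ≤ 4 * b * S.errorScale κ L x₀ ω * (1 / 2) ^ (n + 1) := by
        gcongr
        exact div_aL_mul_add_le κ hL.two_le hL.ratio_le_one hκ

lemma sq_deviation_mul_apply_le (h₀ : IsPrincipalEigenpair (QBox d ρ) (-S.shape L) lam₀ f)
    (hS : S.ShortRangeDecay c c') (hL : S.IsLargeScale c c' L) (κ : ℝ) (hρ : 0 ≤ ρ)
    (hω : ω ∈ EventE1 S L x₀) (hx : x - x₀ ∈ QBox d ρ) :
    ((S.ξ L ω x₀ - S.aL L) * (1 - S.v L (x - x₀)) * f (x - x₀)) ^ 2 ≤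
      16 * d ^ 2 * (2 * d + 1) ^ 2 * S.errorScale κ L x₀ ω * (1 / 2) ^ l1Norm (x - x₀) := by
  have hT := errorScale_nonneg (S := S) (x₀ := x₀) (ω := ω) κ hL.two_le
  rcases eq_or_ne x x₀ with rfl | hne
  · rw [sub_self, S.v_zero, sub_self, mul_zero, zero_mul, zero_pow two_ne_zero]; positivity
  have ha := S.aL_pos L hL.two_le
  have hW := hS.isPotentialWell_shape hL.two_le hρ
  have hshape : S.shape L (x - x₀) * f (x - x₀) ≤ 4 * d * (1 / 2) ^ l1Norm (x - x₀) :=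
    (h₀.mul_apply_le_neighborSum hW.zero_mem hW.apply_zero hx).trans
      (h₀.neighborSum_le_half_pow hW (hL.two_mul_div_le.trans (by norm_num)) (sub_ne_zero.2 hne))
  have hshape0 : 0 ≤ S.shape L (x - x₀) * f (x - x₀) :=
    mul_nonneg (hS.shape_nonneg hL.two_le _) (h₀.nonneg _)
  have hs : (S.ξ L ω x₀ - S.aL L) ^ 2 ≤ (2 * d + 1) ^ 2 :=
    sq_le_sq' (abs_lt.1 hω).1.le (abs_lt.1 hω).2.le
  have ha1 : 1 ≤ S.aL L := by linarith [hL.five_mul_le_aL, (Nat.cast_nonneg d : (0 : ℝ) ≤ d)]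
  calc _ = (S.ξ L ω x₀ - S.aL L) ^ 2 * (S.shape L (x - x₀) * f (x - x₀)) ^ 2 *
          (1 / S.aL L) * (1 / S.aL L) := by rw [shape]; field_simp
    _ ≤ (2 * d + 1) ^ 2 * (4 * d * (1 / 2) ^ l1Norm (x - x₀)) ^ 2 *
          S.errorScale κ L x₀ ω * 1 := by
        gcongr
        · exact inv_aL_le_errorScale κ hL.two_le
        · exact (div_le_one ha).2 ha1
    _ = 16 * d ^ 2 * (2 * d + 1) ^ 2 * S.errorScale κ L x₀ ω * (1 / 2) ^ l1Norm (x - x₀) *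
          (1 / 2) ^ l1Norm (x - x₀) := by ring
    _ ≤ _ := mul_le_of_le_one_right (by positivity) (pow_le_one₀ (by norm_num) (by norm_num))

lemma sq_neighborSum_le (h₀ : IsPrincipalEigenpair (QBox d ρ) (-S.shape L) lam₀ f)
    (hS : S.ShortRangeDecay c c') (hL : S.IsLargeScale c c' L) (κ : ℝ) (hρ : S.aL L ≤ ρ)
    (hx : x - x₀ ∉ QBox d ρ) :
    neighborSum (QBox d ρ) f (x - x₀) ^ 2 ≤
      32 * d ^ 2 * S.errorScale κ L x₀ ω * (1 / 2) ^ l1Norm (x - x₀) := by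
  have ha := S.aL_pos L hL.two_le
  have hW := hS.isPotentialWell_shape hL.two_le (ha.le.trans hρ)
  have hx0 : x - x₀ ≠ 0 := fun h => hx (h ▸ hW.zero_mem)
  have hhalf : (1 / 2 : ℝ) ^ l1Norm (x - x₀) ≤ 2 / S.aL L :=
    half_pow_le_two_div ha (by linarith [half_lt_l1Norm_of_notMem_QBox hx])
  calc _ ≤ (4 * d * (1 / 2 : ℝ) ^ l1Norm (x - x₀)) ^ 2 :=
        pow_le_pow_left₀ (neighborSum_nonneg h₀.nonneg)
          (h₀.neighborSum_le_half_pow hW (hL.two_mul_div_le.trans (by norm_num)) hx0) 2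
    _ = 16 * d ^ 2 * (1 / 2 : ℝ) ^ l1Norm (x - x₀) * (1 / 2) ^ l1Norm (x - x₀) := by ring
    _ ≤ 16 * d ^ 2 * (2 / S.aL L) * (1 / 2) ^ l1Norm (x - x₀) := by gcongr
    _ = 32 * d ^ 2 * (1 / S.aL L) * (1 / 2) ^ l1Norm (x - x₀) := by ring
    _ ≤ _ := by gcongr; exact inv_aL_le_errorScale κ hL.two_le

lemma sq_transplantDefect_le (h₀ : IsPrincipalEigenpair (QBox d ρ) (-S.shape L) lam₀ f)
    (hS : S.ShortRangeDecay c c') (hL : S.IsLargeScale c c' L) (hκ0 : 0 ≤ κ) (hκ : κ ≤ 1 / 2)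
    (hρ : S.aL L ≤ ρ) (hρR : QBox d ρ ⊆ QBox d (R L)) (hω : ω ∈ EventE S R κ L x₀) :
    transplantDefect (QBox d ρ) (-S.shape L) (S.ξ L ω) f x₀ x ^ 2 ≤
      defectConst d c c' * S.errorScale κ L x₀ ω * (1 / 2) ^ l1Norm (x - x₀) := by
  have hT := errorScale_nonneg (S := S) (x₀ := x₀) (ω := ω) κ hL.two_le
  have hρ0 := (S.aL_pos L hL.two_le).le.trans hρ
  unfold defectConst transplantDefect
  split_ifs with hx
  · have hζ := h₀.sq_zeta_mul_apply_le hS hL hκ0 hκ hρ0 hω.2 (mem_QBoxAt.2 (hρR hx))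
    have hs := h₀.sq_deviation_mul_apply_le hS hL κ hρ0 hω.1.1 hx
    have hrest : 0 ≤ 32 * d ^ 2 * S.errorScale κ L x₀ ω * (1 / 2) ^ l1Norm (x - x₀) := by
      positivity
    rw [Pi.neg_apply, sub_neg_eq_add, ξ_sub_add_shape, sub_mul]
    linarith [add_sq_le (a := S.zeta L x₀ x ω * f (x - x₀))
      (b := -((S.ξ L ω x₀ - S.aL L) * (1 - S.v L (x - x₀)) * f (x - x₀)))]
  · refine (h₀.sq_neighborSum_le (ω := ω) hS hL κ hρ hx).trans ?_
    gcongr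
    exact le_add_of_nonneg_left (by positivity)

lemma sum_sq_transplantDefect_le (h₀ : IsPrincipalEigenpair (QBox d ρ) (-S.shape L) lam₀ f)
    (hS : S.ShortRangeDecay c c') (hL : S.IsLargeScale c c' L) (hκ0 : 0 ≤ κ) (hκ : κ ≤ 1 / 2)
    (hρ : S.aL L ≤ ρ) (hρR : QBox d ρ ⊆ QBox d (R L)) (hω : ω ∈ EventE S R κ L x₀)
    (C : Finset (Fin d → ℤ)) :
    ∑ x ∈ C, transplantDefect (QBox d ρ) (-S.shape L) (S.ξ L ω) f x₀ x ^ 2 ≤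
      defectConst d c c' * S.errorScale κ L x₀ ω * 3 ^ d := by
  have hT := errorScale_nonneg (S := S) (x₀ := x₀) (ω := ω) κ hL.two_le
  have hD := defectConst_nonneg d c c'
  calc _ ≤ ∑ x ∈ C, defectConst d c c' * S.errorScale κ L x₀ ω * (1 / 2) ^ l1Norm (x - x₀) :=
        sum_le_sum fun x _ => h₀.sq_transplantDefect_le hS hL hκ0 hκ hρ hρR hω
    _ = defectConst d c c' * S.errorScale κ L x₀ ω *
          ∑ y ∈ C.map (addRightEmbedding (-x₀)), (1 / 2) ^ l1Norm y := by
        simp [mul_sum, sub_eq_add_neg]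
    _ ≤ _ := by gcongr; exact sum_half_pow_l1Norm_le _

lemma sum_add_shape_mul_sq {r : ℕ → ℝ} {phiBar : ℕ → (Fin d → ℤ) → ℝ}
    (h₀ : IsPrincipalEigenpair (QBox d (r L)) (-S.shape L) lam₀ (phiBar L)) :
    ∑ y ∈ QBox d (r L), (S.ξ L ω (y + x₀) + S.shape L y) * phiBar L y ^ 2 =
      S.ξ L ω x₀ + S.Phi r phiBar L x₀ ω -
        (S.ξ L ω x₀ - S.aL L) * ∑ y ∈ QBox d (r L), (1 - S.v L y) * phiBar L y ^ 2 := by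
  have hPhi : S.Phi r phiBar L x₀ ω =
      ∑ y ∈ QBox d (r L), phiBar L y ^ 2 * S.zeta L x₀ (y + x₀) ω :=
    sum_erase _ (by rw [zero_add, zeta_self, mul_zero])
  calc _ = ∑ y ∈ QBox d (r L), (S.ξ L ω x₀ * phiBar L y ^ 2 +
          phiBar L y ^ 2 * S.zeta L x₀ (y + x₀) ω -
            (S.ξ L ω x₀ - S.aL L) * ((1 - S.v L y) * phiBar L y ^ 2)) := by
        refine sum_congr rfl fun y _ => ?_
        have hdecomp := ξ_sub_add_shape (S := S) (L := L) (x := y + x₀) (x₀ := x₀) (ω := ω)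
        rw [add_sub_cancel_right] at hdecomp
        linear_combination phiBar L y ^ 2 * hdecomp
    _ = _ := by rw [sum_sub_distrib, sum_add_distrib, ← mul_sum, ← mul_sum, h₀.2.1, mul_one, hPhi]

lemma abs_deviation_mul_sum_le (h₀ : IsPrincipalEigenpair (QBox d ρ) (-S.shape L) lam₀ f)
    (hS : S.ShortRangeDecay c c') (hL : S.IsLargeScale c c' L) (κ : ℝ) (hρ : 0 ≤ ρ)
    (hω : ω ∈ EventE1 S L x₀) :
    |(S.ξ L ω x₀ - S.aL L) * ∑ y ∈ QBox d ρ, (1 - S.v L y) * f y ^ 2| ≤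
      4 * d * (2 * d / c) * 3 ^ d * (2 * d + 1) * S.ratio L * S.errorScale κ L x₀ ω := by
  have ha := S.aL_pos L hL.two_le
  have hc := hS.1
  have hε := ratio_pos (S := S) hL.two_le
  have hsum : ∑ y ∈ QBox d ρ, (1 - S.v L y) * f y ^ 2 =
      (∑ y ∈ QBox d ρ, S.shape L y * f y ^ 2) / S.aL L := by
    rw [sum_div]
    exact sum_congr rfl fun y _ => by rw [shape]; field_simp
  have hsum0 : 0 ≤ ∑ y ∈ QBox d ρ, S.shape L y * f y ^ 2 :=
    sum_nonneg fun y _ => mul_nonneg (hS.shape_nonneg hL.two_le y) (sq_nonneg _)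
  rw [hsum, abs_mul, abs_of_nonneg (div_nonneg hsum0 ha.le)]
  calc _ ≤ (2 * d + 1) * (4 * d * (2 * d / (c / S.ratio L)) * 3 ^ d / S.aL L) := by
        gcongr
        · exact le_of_lt hω
        · exact h₀.sum_mul_sq_le_of_div_le_half (hS.isPotentialWell_shape hL.two_le hρ)
            (hL.two_mul_div_le.trans (by norm_num))
    _ = 4 * d * (2 * d / c) * 3 ^ d * (2 * d + 1) * S.ratio L * (1 / S.aL L) := by
        rw [div_div_eq_mul_div]; ring
    _ ≤ _ := by gcongr; exact inv_aL_le_errorScale κ hL.two_le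

theorem abs_sub_le_of_mem_EventE {r : ℕ → ℝ} {phiBar : ℕ → (Fin d → ℤ) → ℝ}
    (h : IsPrincipalEigenpair (QBox d (R L)) (S.ξ L ω) lam φ)
    (h₀ : IsPrincipalEigenpair (QBox d (r L)) (-S.shape L) lam₀ (phiBar L))
    (hS : S.ShortRangeDecay c c') (hL : S.IsLargeScale c c' L) (hκ0 : 0 ≤ κ) (hκ : κ ≤ 1 / 2)
    (hr : S.aL L ≤ r L) (hx₀ : x₀ ∈ QBox d (R L - r L)) (hω : ω ∈ EventE S R κ L x₀) :
    |lam - lam₀ - (S.ξ L ω x₀ + S.Phi r phiBar L x₀ ω)| ≤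
      (4 * d * (2 * d / c) * 3 ^ d * (2 * d + 1) + 4 * (defectConst d c c' * 3 ^ d) / c) *
        S.ratio L * S.errorScale κ L x₀ ω := by
  have hr0 := (S.aL_pos L hL.two_le).le.trans hr
  have hk : 0 < c / S.ratio L := div_pos hS.1 (ratio_pos hL.two_le)
  have heig := h.abs_sub_le_of_potentialWell h₀ (hS.isPotentialWell_shape hL.two_le hr0)
    (fun y hy => add_mem_QBox_of_mem_sub hx₀ hy)
    (isPeak_of_mem_EventE hS hL hr0 hx₀ hω) (by positivity) (hL.div_four_add_le hk)
  have hdefect := h₀.sum_sq_transplantDefect_le hS hL hκ0 hκ hr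
    (QBox_subset_of_mem_sub hx₀) hω (QBox d (R L))
  have hdev := h₀.abs_deviation_mul_sum_le hS hL κ hr0 hω.1.1
  rw [h₀.sum_add_shape_mul_sq] at heig
  set s := (S.ξ L ω x₀ - S.aL L) * ∑ y ∈ QBox d (r L), (1 - S.v L y) * phiBar L y ^ 2
  set Ξ := S.ξ L ω x₀ + S.Phi r phiBar L x₀ ω
  calc |lam - lam₀ - Ξ| = |(lam - (lam₀ + (Ξ - s))) + -s| := by ring_nf
    _ ≤ |lam - (lam₀ + (Ξ - s))| + |s| := (abs_add_le _ _).trans_eq (by rw [abs_neg])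
    _ ≤ defectConst d c c' * S.errorScale κ L x₀ ω * 3 ^ d / (c / S.ratio L / 4) +
          4 * d * (2 * d / c) * 3 ^ d * (2 * d + 1) * S.ratio L * S.errorScale κ L x₀ ω :=
        add_le_add (heig.trans (by gcongr)) hdev
    _ = _ := by rw [div_div, div_div_eq_mul_div]; ring

theorem sum_sub_sq_le_of_mem_EventE
    (h : IsPrincipalEigenpair (QBox d (R L)) (S.ξ L ω) lam φ)
    (h₀ : IsPrincipalEigenpair (QBox d ρ) (-S.shape L) lam₀ f)
    (hS : S.ShortRangeDecay c c') (hL : S.IsLargeScale c c' L) (hκ0 : 0 ≤ κ) (hκ : κ ≤ 1 / 2)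
    (hρ : S.aL L ≤ ρ) (hx₀ : x₀ ∈ QBox d (R L - ρ)) (hω : ω ∈ EventE S R κ L x₀) :
    ∑ x ∈ QBox d (R L), (φ x - f (x - x₀)) ^ 2 ≤
      32 * (defectConst d c c' * 3 ^ d) / c ^ 2 * S.ratio L ^ 2 * S.errorScale κ L x₀ ω := by
  have hρ0 := (S.aL_pos L hL.two_le).le.trans hρ
  have hk : 0 < c / S.ratio L := div_pos hS.1 (ratio_pos hL.two_le)
  have hdefect := h₀.sum_sq_transplantDefect_le hS hL hκ0 hκ hρ
    (QBox_subset_of_mem_sub hx₀) hω (QBox d (R L))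
  calc _ ≤ _ := h.sum_sub_sq_le_of_potentialWell h₀ (hS.isPotentialWell_shape hL.two_le hρ0)
        (fun y hy => add_mem_QBox_of_mem_sub hx₀ hy)
        (isPeak_of_mem_EventE hS hL hρ0 hx₀ hω) (by positivity) (hL.div_four_add_le hk)
    _ ≤ 2 * (defectConst d c c' * S.errorScale κ L x₀ ω * 3 ^ d) / (c / S.ratio L / 4) ^ 2 := by
        gcongr
    _ = _ := by rw [div_pow, div_pow, div_div_eq_mul_div, div_div_eq_mul_div]; ring

end IsPrincipalEigenpair

lemma MesoData.aL_le_rL {d : ℕ} (hd : 1 ≤ d) {Ω : Type} [MeasurableSpace Ω]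
    {S : GaussSetting d Ω} (M : MesoData S) {L : ℕ} (hL : 2 ≤ L) (ha : 1 < S.aL L) :
    S.aL L ≤ M.rL L := by
  have hne : (QBox d (M.rL L)).Nonempty := by
    by_contra hempty
    simpa [not_nonempty_iff_eq_empty.1 hempty] using (M.principal L hL).2.1
  have hr0 : 0 ≤ M.rL L := by
    obtain ⟨x, hx⟩ := hne
    linarith [mem_QBox.1 hx ⟨0, hd⟩, abs_nonneg (x ⟨0, hd⟩ : ℝ)]
  have hlog := M.rL_lower L hL
  have hr : 0 < M.rL L := hr0.lt_of_ne fun h => by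
    rw [← h, Real.log_zero] at hlog
    exact (Real.log_pos ha).not_ge hlog
  exact (Real.log_le_log_iff (zero_lt_one.trans ha) hr).1 hlog

end Field

end

theorem mesoscopic_eigenpair_approximation_general {d : ℕ} {Ω : Type} [MeasurableSpace Ω]
    (S : GaussSetting d Ω) {c c' : ℝ} (hS : S.ShortRangeDecay c c') (hA : S.Assumption1)
    {r R lamBar : ℕ → ℝ} {phiBar : ℕ → (Fin d → ℤ) → ℝ}
    (hr : ∀ᶠ L in atTop, S.aL L ≤ r L)
    (hbar : ∀ L, 2 ≤ L → IsPrincipalEigenpair (QBox d (r L)) (-S.shape L) (lamBar L) (phiBar L))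
    {κ : ℝ} (hκ0 : 0 ≤ κ) (hκ : κ ≤ 1 / 2)
    {lam1 : ℕ → Ω → ℝ} {phi1 : ℕ → Ω → (Fin d → ℤ) → ℝ}
    (hprin : ∀ L, 2 ≤ L → ∀ ω,
      IsPrincipalEigenpair (QBox d (R L)) (S.ξ L ω) (lam1 L ω) (phi1 L ω)) :
    ∃ C > (0 : ℝ), ∃ L₀ : ℕ, 1 ≤ L₀ ∧ ∀ L : ℕ, L₀ ≤ L →
      ∀ x₀ ∈ QBox d (R L - r L), ∀ ω ∈ EventE S R κ L x₀,
      (|lam1 L ω - lamBar L - (S.ξ L ω x₀ + S.Phi r phiBar L x₀ ω)|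
        ≤ C * S.ratio L * S.errorScale κ L x₀ ω) ∧
      (Real.sqrt (∑ x ∈ QBox d (R L), (phi1 L ω x - phiBar L (x - x₀)) ^ 2)
        ≤ C * S.ratio L * Real.sqrt (S.errorScale κ L x₀ ω)) := by
  have hc := hS.1
  have hD := defectConst_nonneg d c c'
  set C₁ := 4 * d * (2 * d / c) * 3 ^ d * (2 * d + 1) + 4 * (defectConst d c c' * 3 ^ d) / c
  set C₂ := 32 * (defectConst d c c' * 3 ^ d) / c ^ 2
  have hC₁ : 0 ≤ C₁ := by positivity
  obtain ⟨L₀, hL₀⟩ := eventually_atTop.1 ((GaussSetting.eventually_isLargeScale hA c c').and hr)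
  refine ⟨C₁ + √C₂ + 1, by positivity, max L₀ 1, le_max_right _ _, fun L hLL x₀ hx₀ ω hω => ?_⟩
  obtain ⟨hL, hrL⟩ := hL₀ L ((le_max_left _ _).trans hLL)
  have hε := GaussSetting.ratio_pos (S := S) hL.two_le
  have hT := GaussSetting.errorScale_nonneg (S := S) (x₀ := x₀) (ω := ω) κ hL.two_le
  have h := hprin L hL.two_le ω
  have h₀ := hbar L hL.two_le
  constructor
  · refine (h.abs_sub_le_of_mem_EventE h₀ hS hL hκ0 hκ hrL hx₀ hω).trans ?_
    gcongr ?_ * _ * _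
    linarith [Real.sqrt_nonneg C₂]
  · refine (Real.sqrt_le_sqrt (h.sum_sub_sq_le_of_mem_EventE h₀ hS hL hκ0 hκ hrL hx₀ hω)).trans ?_
    rw [Real.sqrt_mul' _ hT, Real.sqrt_mul' _ (sq_nonneg _), Real.sqrt_sq hε.le]
    gcongr ?_ * _ * _
    linarith

/-- Theorem 4.1 / Theorem 4.2: approximation of the principal
eigenpair on the event `E_{L,x₀}(κ)`.
There are `C > 0` and `L₀ ≥ 1` such that for all `L ≥ L₀` and `x₀ ∈ Q_{R_L − r_L}`, on
`E_{L,x₀}(κ)`: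
`|λ₁(Q_{R_L},ξ_L) − λ̄_L − Ξ_L(x₀)| ≤ C (d_L/a_L)((d_L/a_L)^{1−2κ}|ξ_L(x₀)−a_L| + 1/a_L)`
and `‖φ_{R_L} − φ̄_L(·−x₀)‖_{ℓ²(Q_{R_L})}
  ≤ C (d_L/a_L) √((d_L/a_L)^{1−2κ}|ξ_L(x₀)−a_L| + 1/a_L)`. -/
theorem mesoscopic_eigenpair_approximation
    {d : ℕ} (hd : 1 ≤ d) {Ω : Type} [MeasurableSpace Ω] (S : GaussSetting d Ω)
    (c c' : ℝ) (hSR : S.ShortRangeDecay c c')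
    (hLR : S.LongRangeDecay)
    (hA1 : S.Assumption1)
    (M : MesoData S)
    (κ : ℝ) (hκ : 0 < κ ∧ κ < 1 / 3)
    -- `(lam1 L ω, phi1 L ω)` is the principal Dirichlet eigenpair of `Δ + ξ_L` on `Q_{R_L}`
    (lam1 : ℕ → Ω → ℝ) (phi1 : ℕ → Ω → (Fin d → ℤ) → ℝ)
    (hprin : ∀ L : ℕ, 2 ≤ L → ∀ ω,
      IsPrincipalEigenpair (QBox d (M.RL L)) (S.ξ L ω) (lam1 L ω) (phi1 L ω)) :
    ∃ C > (0 : ℝ), ∃ L₀ : ℕ, 1 ≤ L₀ ∧ ∀ L : ℕ, L₀ ≤ L →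
      ∀ x₀ ∈ QBox d (M.RL L - M.rL L), ∀ ω ∈ EventE S M.RL κ L x₀,
      (|lam1 L ω - M.lamBar L - (S.ξ L ω x₀ + S.Phi M.rL M.phiBar L x₀ ω)|
        ≤ C * (S.dL L / S.aL L) *
            ((S.dL L / S.aL L) ^ ((1 : ℝ) - 2 * κ) * |S.ξ L ω x₀ - S.aL L|
              + 1 / S.aL L)) ∧
      (Real.sqrt (∑ x ∈ QBox d (M.RL L), (phi1 L ω x - M.phiBar L (x - x₀)) ^ 2)
        ≤ C * (S.dL L / S.aL L) *
            Real.sqrt ((S.dL L / S.aL L) ^ ((1 : ℝ) - 2 * κ) * |S.ξ L ω x₀ - S.aL L|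
              + 1 / S.aL L)) := by
  refine mesoscopic_eigenpair_approximation_general S hSR hA1 ?_ M.principal hκ.1.le
    (by linarith [hκ.2]) hprin
  filter_upwards [eventually_ge_atTop 2,
    (GaussSetting.tendsto_aL_atTop hA1).eventually_gt_atTop 1] with L hL ha
  exact M.aL_le_rL hd hL ha
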